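/- arXiv:2111.08048 — 8 statements merged into one kernel-verified Lean document; each statement's English description precedes it below -/
import Mathlib

section
/- There exists a function h' : ℕ⁴ → ℕ such that the following holds. Let E be a 2-stage stochastic matrix with n blocks and block dimensions r, s, t, and let I be any subset of its columns designated integral. Then every x ∈ ker_X(E) admits a one-fat decomposition x = h + g whose fat element h satisfies ‖h‖∞ ≤ h'(r, s, t, ‖E‖∞), independently of the number n of blocks. -/
/-!
The integrality pattern `I` plays no role: if `g ⊑ x` is an integral kernel element then `x - g` lies
in the mixed kernel automatically. Flipping signs of columns makes `x = (y, z₁, …, zₙ)` nonnegative,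
and the blocks `A y + B zᵢ = 0` then come from a finite list of types depending on `r, s, t, ‖E‖∞`.
An integral `g₀ ≤ y` is needed that works for all blocks simultaneously
(`exists_uniform_rounding`).

For each type `τ`, the fiber `{z ≥ 0 | A y + B z = 0}` is the convex hull of at most `2 ^ s` points
`v (τ, S)` plus the recession cone `{d ≥ 0 | B d = 0}` (`exists_fiber_vertices`). The joint vector
`(y, (v (τ, S)))` is a nonnegative solution of an integral homogeneous system whose size does not
depend on `n`, hence `(y, v) = ∑ w_C G_C` with `w_C ≥ 0` and integral generators `G_C` from a fixed
finite list (`exists_int_generators`).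

Let `N = 2 ^ s` and let `g₀` be the `y`-part of `∑ max(0, ⌊w_C⌋ - N) G_C`. For a block with local
vector `z = ∑ μ_S v (τ, S) + d`, expand `z = ∑ μ_S w_C G_C(τ, S) + ∑ ρ_q H_q` with generators `H_q`
of the recession cone. The coefficients `μ_S w_C` are rounded down to integers `m_{C,S}` with
`∑_S m_{C,S} = max(0, ⌊w_C⌋ - N)`, which is possible since `∑_S ⌊μ_S w_C⌋ ≥ ⌊w_C⌋ - N`
(`exists_rounding`), and the `ρ_q` are rounded down to `⌊ρ_q⌋`. The resulting integral vector solves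
the block together with `g₀`, and all coefficients have changed by at most `N + 1`.
-/

open Matrix BigOperators

/-- The ℓ₁-norm of a real vector. -/
def vnorm1 {ι : Type*} [Fintype ι] (x : ι → ℝ) : ℝ := ∑ i, |x i|

/-- The largest absolute value of an entry of an integer matrix. -/
def matNormInf {R C : Type*} [Fintype R] [Fintype C] (E : Matrix R C ℤ) : ℕ :=
  Finset.univ.sup fun p : R × C => (E p.1 p.2).natAbs

/-- `x` is conformal to `y` : componentwise `|x i| ≤ |y i|` and `x i * y i ≥ 0`. -/
def ConformalTo {ι : Type*} (x y : ι → ℝ) : Prop :=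
  ∀ i, |x i| ≤ |y i| ∧ 0 ≤ x i * y i

/-- The mixed kernel of an integer matrix `E` with integral columns `I`. -/
def MixedKer {R C : Type*} [Fintype C] [DecidableEq C]
    (E : Matrix R C ℤ) (I : Finset C) (x : C → ℝ) : Prop :=
  (E.map (Int.cast : ℤ → ℝ)).mulVec x = 0 ∧ ∀ i ∈ I, ∃ z : ℤ, x i = z

/-- `g` is a circuit of the integer matrix `A` : nonzero, integral, in the kernel,
with coprime entries and inclusion-minimal support among nonzero kernel elements. -/
def IsCircuit {R C : Type*} [Fintype C] (A : Matrix R C ℤ) (g : C → ℤ) : Prop :=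
  g ≠ 0 ∧ A.mulVec g = 0 ∧ (Finset.univ.gcd fun i => (g i).natAbs) = 1 ∧
  ∀ y : C → ℝ, y ≠ 0 → (A.map (Int.cast : ℤ → ℝ)).mulVec y = 0 →
    ¬ (Function.support y ⊂ Function.support fun i => ((g i : ℝ)))

/-- Membership in the mixed Graver basis `G_X(E)` of `E` w.r.t. integral columns `I`. -/
def InMixedGraver {R C : Type*} [Fintype C] [DecidableEq C]
    (E : Matrix R C ℤ) (I : Finset C) (g : C → ℝ) : Prop :=
  (MixedKer E I g ∧ (∃ i ∈ I, g i ≠ 0) ∧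
    ∀ y, MixedKer E I y → y ≠ 0 → y ≠ g → ¬ ConformalTo y g) ∨
  ((∀ i ∈ I, g i = 0) ∧
    ∃ gz : {i : C // i ∉ I} → ℤ, (∀ i : {i : C // i ∉ I}, g i.1 = gz i) ∧
      IsCircuit (E.submatrix id (Subtype.val : {i : C // i ∉ I} → C)) gz)

/-- `x = h + g` is a one-fat decomposition of `x ∈ ker_X(E)` with fat element `h`. -/
def OneFatDecomp {R C : Type*} [Fintype C] [DecidableEq C]
    (E : Matrix R C ℤ) (I : Finset C) (x h g : C → ℝ) : Prop :=
  x = h + g ∧ ConformalTo h x ∧ ConformalTo g x ∧ MixedKer E I h ∧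
  (E.map (Int.cast : ℤ → ℝ)).mulVec g = 0 ∧ (∀ i, ∃ z : ℤ, g i = z)

/-! ### Integral generators of cones -/

/-- From a nonnegative `x`, a maximal step in direction `-d` stays nonnegative and makes a positive
coordinate of `x` vanish. -/
lemma exists_max_step {C : Type*} [Fintype C] (x d : C → ℝ)
    (hx : ∀ i, 0 ≤ x i) (hd : ∀ i, 0 < d i → 0 < x i) (hpos : ∃ i, 0 < d i) :
    ∃ u : ℝ, 0 < u ∧ (∀ i, 0 ≤ x i - u * d i) ∧ ∃ i, 0 < x i ∧ x i - u * d i = 0 := by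
  classical
  obtain ⟨i₀, hi₀⟩ := hpos
  obtain ⟨j, hj, hmin⟩ := Finset.exists_min_image
    (Finset.univ.filter fun i => 0 < d i) (fun i => x i / d i) ⟨i₀, by simpa using hi₀⟩
  have hj' : 0 < d j := by simpa using hj
  refine ⟨x j / d j, div_pos (hd j hj') hj', fun i => ?_, j, hd j hj', ?_⟩
  · by_cases hi : 0 < d i
    · have := hmin i (by simpa using hi)
      have := (le_div_iff₀ hi).1 this
      linarith
    · have h1 : 0 ≤ x j / d j := (div_pos (hd j hj') hj').le
      nlinarith [hx i, mul_nonneg h1 (by linarith : 0 ≤ - d i)]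
  · field_simp; ring

/-- A nonnegative real solution of an integral homogeneous system can be replaced by an integral one
with the same support. By simultaneous Diophantine approximation some multiple `q • x` is close to
an integral vector `p`; the entries of `M p = M (p - q • x)` are integers of absolute value less
than `1`, hence vanish. -/
lemma exists_int_ker_same_support {R C : Type*} [Fintype R] [Fintype C]
    (M : R → C → ℤ) (x : C → ℝ) (hx : ∀ i, 0 ≤ x i) (hM : ∀ r, ∑ c, (M r c : ℝ) * x c = 0) :
    ∃ p : C → ℤ, (∀ i, 0 ≤ p i) ∧ (∀ r, ∑ c, M r c * p c = 0) ∧ ∀ i, 0 < p i ↔ 0 < x i := by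
  classical
  obtain ⟨N, hNpos, hNx, hNM⟩ : ∃ N : ℕ, 0 < N ∧ (∀ i, 0 < x i → 1 ≤ N * x i) ∧
      ∀ r, ∑ c, |(M r c : ℝ)| < N := by
    obtain ⟨N, hN⟩ := exists_nat_gt (1 + ∑ i, |1 / x i| + ∑ r, ∑ c, |(M r c : ℝ)|)
    have h1 : 0 ≤ ∑ i, |1 / x i| := Finset.sum_nonneg fun i _ => abs_nonneg _
    have h2 : ∀ r, 0 ≤ ∑ c, |(M r c : ℝ)| := fun r => Finset.sum_nonneg fun i _ => abs_nonneg _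
    have h3 : 0 ≤ ∑ r, ∑ c, |(M r c : ℝ)| := Finset.sum_nonneg fun r _ => h2 r
    refine ⟨N, by exact_mod_cast (by linarith : (0 : ℝ) < N), fun i hi => ?_, fun r => ?_⟩
    · have h4 := Finset.single_le_sum (f := fun i => |1 / x i|) (fun i _ => abs_nonneg _)
        (Finset.mem_univ i)
      have h5 : 1 / x i ≤ N := by
        have := le_abs_self (1 / x i)
        linarith
      rwa [div_le_iff₀ hi] at h5
    · have h4 := Finset.single_le_sum (f := fun r => ∑ c, |(M r c : ℝ)|) (fun r _ => h2 r)
        (Finset.mem_univ r)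
      linarith
  have hNR : (0 : ℝ) < N := by exact_mod_cast hNpos
  -- Pigeonhole on the fractional parts of the multiples `q • x`, rounded to multiples of `1 / N`.
  have hlt : ∀ (q : ℕ) (i : C), ⌊N * Int.fract (q * x i)⌋₊ < N := fun q i => by
    rw [Nat.floor_lt (by positivity)]
    nlinarith [Int.fract_lt_one (q * x i)]
  obtain ⟨q₁', q₂', hne, heq⟩ := Finite.exists_ne_map_eq_of_infinite
    (fun (q : ℕ) (i : C) => (⟨⌊N * Int.fract (q * x i)⌋₊, hlt q i⟩ : Fin N))
  obtain ⟨q₁, q₂, hlt12, heq⟩ : ∃ q₁ q₂ : ℕ, q₁ < q₂ ∧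
      ∀ i, ⌊N * Int.fract (q₁ * x i)⌋₊ = ⌊N * Int.fract (q₂ * x i)⌋₊ := by
    have hh : ∀ i, ⌊N * Int.fract (q₁' * x i)⌋₊ = ⌊N * Int.fract (q₂' * x i)⌋₊ := fun i => by
      have := congrFun heq i
      simpa using this
    rcases lt_or_gt_of_ne hne with h | h
    · exact ⟨_, _, h, hh⟩
    · exact ⟨_, _, h, fun i => (hh i).symm⟩
  have hclose : ∀ i, |N * (Int.fract (q₂ * x i) - Int.fract (q₁ * x i))| < 1 := fun i => by
    have a1 := Nat.floor_le (a := N * Int.fract (q₁ * x i)) (by positivity)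
    have a2 := Nat.lt_floor_add_one (N * Int.fract (q₁ * x i))
    have b1 := Nat.floor_le (a := N * Int.fract (q₂ * x i)) (by positivity)
    have b2 := Nat.lt_floor_add_one (N * Int.fract (q₂ * x i))
    rw [heq i] at a1 a2
    rw [abs_lt]
    constructor <;> linarith
  set p : C → ℤ := fun i => ⌊q₂ * x i⌋ - ⌊q₁ * x i⌋ with hp
  set e : C → ℝ := fun i => Int.fract (q₂ * x i) - Int.fract (q₁ * x i) with he
  have hpe : ∀ i, (p i : ℝ) = (q₂ - q₁) * x i - e i := fun i => by
    simp only [hp, he, Int.fract]; push_cast; ring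
  have hq : (1 : ℝ) ≤ q₂ - q₁ := by
    have : (q₁ : ℝ) + 1 ≤ q₂ := by exact_mod_cast hlt12
    linarith
  have hpos : ∀ i, 0 < x i → 0 < p i := fun i hi => by
    have h1 := (abs_lt.1 (hclose i)).2
    have h2 := hNx i hi
    have h3 : x i ≤ (q₂ - q₁) * x i := by nlinarith
    have : (0 : ℝ) < N * p i := by
      rw [hpe]
      have : (N : ℝ) * x i ≤ N * ((q₂ - q₁) * x i) := by gcongr
      have h4 : (N : ℝ) * e i < 1 := h1
      linarith
    exact_mod_cast pos_of_mul_pos_right this hNR.le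
  have hzero : ∀ i, ¬ 0 < x i → p i = 0 := fun i hi => by
    have : x i = 0 := le_antisymm (not_lt.1 hi) (hx i)
    simp [hp, this]
  refine ⟨p, fun i => ?_, fun r => ?_, fun i => ⟨fun h => ?_, hpos i⟩⟩
  · by_cases h : 0 < x i
    · exact (hpos i h).le
    · exact (hzero i h).ge
  · have h1 : ((∑ c, M r c * p c : ℤ) : ℝ) = - ∑ c, (M r c : ℝ) * e c := by
      push_cast
      simp only [hpe, mul_sub, Finset.sum_sub_distrib]
      have : ∑ c, (M r c : ℝ) * ((q₂ - q₁) * x c) = (q₂ - q₁) * ∑ c, (M r c : ℝ) * x c := by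
        rw [Finset.mul_sum]; exact Finset.sum_congr rfl fun c _ => by ring
      rw [this, hM r]
      ring
    have h2 : |(N : ℝ) * ∑ c, (M r c : ℝ) * e c| < N * 1 := by
      rw [Finset.mul_sum]
      calc |∑ c, (N : ℝ) * (M r c * e c)| ≤ ∑ c, |(N : ℝ) * (M r c * e c)| :=
            Finset.abs_sum_le_sum_abs _ _
        _ ≤ ∑ c, |(M r c : ℝ)| := Finset.sum_le_sum fun c _ => by
            have : |(N : ℝ) * (M r c * e c)| = |(M r c : ℝ)| * |N * e c| := by
              rw [← abs_mul]; congr 1; ring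
            rw [this]
            exact mul_le_of_le_one_right (abs_nonneg _) (hclose c).le
        _ < N * 1 := by simpa using hNM r
    rw [abs_mul, abs_of_pos hNR] at h2
    have h3 := lt_of_mul_lt_mul_left h2 hNR.le
    rw [← abs_neg, ← h1] at h3
    exact Int.abs_lt_one_iff.1 (by exact_mod_cast h3)
  · by_contra hc
    exact h.ne' (hzero i hc)

/-- The cone `{x ≥ 0 | M x = 0}` is generated by finitely many integral vectors, one for each
possible support (for supports that do not occur, `G S` carries no information). -/
lemma exists_int_generators {R C : Type*} [Fintype R] [Fintype C] (M : R → C → ℤ) :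
    ∃ G : Finset C → C → ℤ, (∀ S c, 0 ≤ G S c) ∧ (∀ S r, ∑ c, M r c * G S c = 0) ∧
      ∀ x : C → ℝ, (∀ c, 0 ≤ x c) → (∀ r, ∑ c, (M r c : ℝ) * x c = 0) →
        ∃ w : Finset C → ℝ, (∀ S, 0 ≤ w S) ∧ ∀ c, x c = ∑ S, w S * G S c := by
  classical
  have key : ∀ S : Finset C, ∃ p : C → ℤ, (∀ i, 0 ≤ p i) ∧ (∀ r, ∑ c, M r c * p c = 0) ∧
      ((∃ p' : C → ℤ, (∀ i, 0 ≤ p' i) ∧ (∀ r, ∑ c, M r c * p' c = 0) ∧ ∀ i, 0 < p' i ↔ i ∈ S) →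
        ∀ i, 0 < p i ↔ i ∈ S) := fun S => by
    by_cases h : ∃ p' : C → ℤ, (∀ i, 0 ≤ p' i) ∧ (∀ r, ∑ c, M r c * p' c = 0) ∧
        ∀ i, 0 < p' i ↔ i ∈ S
    · obtain ⟨p, h1, h2, h3⟩ := h
      exact ⟨p, h1, h2, fun _ => h3⟩
    · exact ⟨0, by simp, by simp, fun h' => absurd h' h⟩
  choose G hG0 hGM hGS using key
  refine ⟨G, hG0, hGM, ?_⟩
  suffices H : ∀ (m : ℕ) (x : C → ℝ), (Finset.univ.filter fun c => 0 < x c).card = m →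
      (∀ c, 0 ≤ x c) → (∀ r, ∑ c, (M r c : ℝ) * x c = 0) →
        ∃ w : Finset C → ℝ, (∀ S, 0 ≤ w S) ∧ ∀ c, x c = ∑ S, w S * G S c from
    fun x => H _ x rfl
  intro m
  induction m using Nat.strong_induction_on with
  | _ m ih =>
    intro x hm hx hM
    set S := Finset.univ.filter fun c => 0 < x c with hS
    have hmem : ∀ i, i ∈ S ↔ 0 < x i := by simp [hS]
    by_cases hne : ∃ i, 0 < x i
    · obtain ⟨p, hp0, hpM, hps⟩ := exists_int_ker_same_support M x hx hM
      have hG : ∀ i, 0 < G S i ↔ 0 < x i := fun i => by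
        rw [hGS S ⟨p, hp0, hpM, fun i => (hps i).trans (hmem i).symm⟩ i, hmem]
      obtain ⟨u, hu, hu0, j, hj, hju⟩ := exists_max_step x (fun i => (G S i : ℝ)) hx
        (fun i hi => (hG i).1 (by exact_mod_cast hi))
        (by obtain ⟨i, hi⟩ := hne; exact ⟨i, by exact_mod_cast (hG i).2 hi⟩)
      obtain ⟨w, hw0, hw⟩ := ih (Finset.univ.filter fun c => 0 < x c - u * G S c).card
        (by
          rw [← hm]
          apply Finset.card_lt_card
          rw [Finset.ssubset_iff_of_subset]
          · exact ⟨j, (hmem j).2 hj, by simp [sub_eq_zero.1 hju]⟩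
          · intro i hi
            simp only [Finset.mem_filter, Finset.mem_univ, true_and] at hi
            rw [hmem]
            have : (0 : ℝ) ≤ G S i := by exact_mod_cast hG0 S i
            nlinarith [mul_nonneg hu.le this])
        (fun c => x c - u * G S c) rfl hu0
        (fun r => by
          have h1 : ∑ c, (M r c : ℝ) * G S c = 0 := by exact_mod_cast hGM S r
          have h2 : ∑ c, (M r c : ℝ) * (u * G S c) = u * ∑ c, (M r c : ℝ) * G S c := by
            rw [Finset.mul_sum]; exact Finset.sum_congr rfl fun c _ => by ring
          simp only [mul_sub, Finset.sum_sub_distrib, hM r, h2, h1]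
          simp)
      refine ⟨fun S' => w S' + if S' = S then u else 0, fun S' => ?_, fun c => ?_⟩
      · have := hw0 S'
        dsimp only
        split_ifs <;> linarith
      · simp only [add_mul, Finset.sum_add_distrib, ite_mul, zero_mul, Finset.sum_ite_eq',
          Finset.mem_univ, if_true]
        linarith [hw c]
    · refine ⟨0, by simp, fun c => ?_⟩
      push Not at hne
      simpa using le_antisymm (hne c) (hx c)

/-! ### Vertices of fibers -/

/-- Every point of a nonempty polyhedron `{z ≥ 0 | B z = b}` is a convex combination of boundedly
many points `v S` of it (`S` runs over all subsets of coordinates, so their number depends on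
neither `B` nor `b`) plus a point of its recession cone. Here `v S` is any point of the polyhedron
with support inside `S`, if one exists, and an arbitrary point otherwise. -/
lemma exists_fiber_vertices {K L : Type*} [Fintype L] (B : K → L → ℝ) (b : K → ℝ)
    (hne : ∃ z : L → ℝ, (∀ l, 0 ≤ z l) ∧ ∀ k, ∑ l, B k l * z l = b k) :
    ∃ v : Finset L → L → ℝ, (∀ S l, 0 ≤ v S l) ∧ (∀ S k, ∑ l, B k l * v S l = b k) ∧
      ∀ z : L → ℝ, (∀ l, 0 ≤ z l) → (∀ k, ∑ l, B k l * z l = b k) →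
        ∃ (μ : Finset L → ℝ) (d : L → ℝ), (∀ S, 0 ≤ μ S) ∧ ∑ S, μ S = 1 ∧ (∀ l, 0 ≤ d l) ∧
          (∀ k, ∑ l, B k l * d l = 0) ∧ ∀ l, z l = ∑ S, μ S * v S l + d l := by
  classical
  have key : ∀ S : Finset L, ∃ p : L → ℝ, (∀ i, 0 ≤ p i) ∧ (∀ k, ∑ l, B k l * p l = b k) ∧
      ((∃ p' : L → ℝ, (∀ i, 0 ≤ p' i) ∧ (∀ k, ∑ l, B k l * p' l = b k) ∧
        ∀ i, 0 < p' i → i ∈ S) → ∀ i, 0 < p i → i ∈ S) := fun S => by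
    by_cases h : ∃ p' : L → ℝ, (∀ i, 0 ≤ p' i) ∧ (∀ k, ∑ l, B k l * p' l = b k) ∧
        ∀ i, 0 < p' i → i ∈ S
    · obtain ⟨p, h1, h2, h3⟩ := h
      exact ⟨p, h1, h2, fun _ => h3⟩
    · obtain ⟨z, h1, h2⟩ := hne
      exact ⟨z, h1, h2, fun h' => absurd h' h⟩
  choose v hv0 hvB hvS using key
  refine ⟨v, hv0, hvB, ?_⟩
  suffices H : ∀ (m : ℕ) (z : L → ℝ), (Finset.univ.filter fun c => 0 < z c).card = m →
      (∀ l, 0 ≤ z l) → (∀ k, ∑ l, B k l * z l = b k) →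
        ∃ (μ : Finset L → ℝ) (d : L → ℝ), (∀ S, 0 ≤ μ S) ∧ ∑ S, μ S = 1 ∧ (∀ l, 0 ≤ d l) ∧
          (∀ k, ∑ l, B k l * d l = 0) ∧ ∀ l, z l = ∑ S, μ S * v S l + d l from
    fun z => H _ z rfl
  intro m
  induction m using Nat.strong_induction_on with
  | _ m ih =>
    intro z hm hz hB
    set S := Finset.univ.filter fun c => 0 < z c with hS
    have hmem : ∀ i, i ∈ S ↔ 0 < z i := by simp [hS]
    have hvz : ∀ i, 0 < v S i → 0 < z i := fun i hi =>
      (hmem i).1 (hvS S ⟨z, hz, hB, fun i hi => (hmem i).2 hi⟩ i hi)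
    have hBd : ∀ k, ∑ l, B k l * (v S l - z l) = 0 := fun k => by
      simp only [mul_sub, Finset.sum_sub_distrib, hB, hvB, sub_self]
    by_cases hpos : ∃ i, 0 < v S i - z i
    · -- The ray from `v S` through `z` leaves the fiber at a point of smaller support.
      obtain ⟨u, hu, hu0, j, hj, hju⟩ := exists_max_step z (fun i => v S i - z i) hz
        (fun i hi => hvz i (by linarith [hz i])) hpos
      obtain ⟨μ, d, hμ0, hμ1, hd0, hdB, hzz⟩ :=
        ih (Finset.univ.filter fun c => 0 < z c - u * (v S c - z c)).card
        (by
          rw [← hm]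
          apply Finset.card_lt_card
          rw [Finset.ssubset_iff_of_subset]
          · exact ⟨j, (hmem j).2 hj, fun h => (Finset.mem_filter.1 h).2.ne' hju⟩
          · intro i hi
            simp only [Finset.mem_filter, Finset.mem_univ, true_and] at hi
            rw [hmem]
            by_contra hc
            have h1 : z i = 0 := le_antisymm (not_lt.1 hc) (hz i)
            rw [h1] at hi
            nlinarith [mul_nonneg hu.le (hv0 S i)])
        (fun c => z c - u * (v S c - z c)) rfl hu0
        (fun k => by
          have h2 : ∑ c, B k c * (u * (v S c - z c)) = u * ∑ c, B k c * (v S c - z c) := by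
            rw [Finset.mul_sum]; exact Finset.sum_congr rfl fun c _ => by ring
          have h3 : ∑ c, B k c * (z c - u * (v S c - z c)) =
              ∑ c, B k c * z c - ∑ c, B k c * (u * (v S c - z c)) := by
            rw [← Finset.sum_sub_distrib]; exact Finset.sum_congr rfl fun c _ => by ring
          rw [h3, h2, hBd, hB]; ring)
      have hu1 : 0 < 1 + u := by linarith
      refine ⟨fun S' => (μ S' + if S' = S then u else 0) / (1 + u), fun l => d l / (1 + u),
        fun S' => ?_, ?_, fun l => div_nonneg (hd0 l) hu1.le, fun k => ?_, fun l => ?_⟩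
      · have := hμ0 S'
        apply div_nonneg _ hu1.le
        split_ifs <;> linarith
      · rw [← Finset.sum_div, Finset.sum_add_distrib, hμ1]
        simp [hu1.ne']
      · simp only [← mul_div_assoc, ← Finset.sum_div, hdB, zero_div]
      · simp only [div_mul_eq_mul_div, ← Finset.sum_div, add_mul, Finset.sum_add_distrib, ite_mul,
          zero_mul, Finset.sum_ite_eq', Finset.mem_univ, if_true]
        rw [← add_div, eq_div_iff hu1.ne']
        linarith [hzz l]
    · push Not at hpos
      refine ⟨fun S' => if S' = S then 1 else 0, fun l => z l - v S l, fun S' => ?_, by simp,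
        fun l => by linarith [hpos l], fun k => ?_, fun l => by simp⟩
      · simp only; split_ifs <;> norm_num
      · simp only [mul_sub, Finset.sum_sub_distrib, hB, hvB, sub_self]

/-! ### Simultaneous rounding of all blocks -/

lemma exists_le_sum_eq {J : Type*} [Fintype J] (f : J → ℕ) (n : ℕ) (hn : n ≤ ∑ j, f j) :
    ∃ m : J → ℕ, (∀ j, m j ≤ f j) ∧ ∑ j, m j = n := by
  classical
  induction n with
  | zero => exact ⟨0, by simp, by simp⟩
  | succ n ih =>
    obtain ⟨m, hm, hs⟩ := ih (by omega)
    obtain ⟨j, hj⟩ : ∃ j, m j < f j := by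
      by_contra hc
      push Not at hc
      have := Finset.sum_le_sum fun j (_ : j ∈ Finset.univ) => hc j
      omega
    refine ⟨fun i => m i + if i = j then 1 else 0, fun i => ?_, ?_⟩
    · have := hm i
      simp only
      split_ifs with h
      · subst h; omega
      · omega
    · simp [Finset.sum_add_distrib, hs]

/-- The products `μ j * w` can be rounded down to naturals whose sum `⌊w⌋₊ - |J|` (truncated
subtraction) does not depend on `μ`. -/
lemma exists_rounding {J : Type*} [Fintype J] (μ : J → ℝ) (hμ : ∀ j, 0 ≤ μ j)
    (hμ1 : ∑ j, μ j = 1) (w : ℝ) (hw : 0 ≤ w) :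
    ∃ m : J → ℕ, (∀ j, (m j : ℝ) ≤ μ j * w) ∧ ∑ j, m j = ⌊w⌋₊ - Fintype.card J := by
  obtain ⟨m, hm, hs⟩ := exists_le_sum_eq (fun j => ⌊μ j * w⌋₊) (⌊w⌋₊ - Fintype.card J) (by
    rw [Nat.sub_le_iff_le_add]
    have h1 : ∑ j, μ j * w ≤ ∑ j, ((⌊μ j * w⌋₊ : ℝ) + 1) :=
      Finset.sum_le_sum fun j _ => (Nat.lt_floor_add_one _).le
    rw [← Finset.sum_mul, hμ1, one_mul, Finset.sum_add_distrib] at h1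
    have h2 : (⌊w⌋₊ : ℝ) ≤ w := Nat.floor_le hw
    have : (⌊w⌋₊ : ℝ) ≤ (∑ j, ⌊μ j * w⌋₊ + Fintype.card J : ℕ) := by
      push_cast
      simp at h1
      linarith
    exact_mod_cast this)
  refine ⟨m, fun j => ?_, hs⟩
  exact (Nat.cast_le.2 (hm j)).trans (Nat.floor_le (mul_nonneg (hμ j) hw))

/-- The nonnegative case, for finitely many block types `τ` with global part `A τ` and local part
`B τ`: any real `y ≥ 0` has an integral `g₀ ≤ y` at bounded distance, depending only on `y`, such
that *every* real `z ≥ 0` solving a block with `y` has an integral `g ≤ z` at bounded distance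
solving the same block with `g₀`. As `g₀` is chosen before `τ` and `z`, the bound does not depend on
how many blocks share `y`. -/
lemma exists_uniform_rounding (T P L K : Type*) [Fintype T] [Fintype P] [Fintype L] [Fintype K]
    (A : T → K → P → ℤ) (B : T → K → L → ℤ) :
    ∃ D : ℝ, ∀ y : P → ℝ, (∀ a, 0 ≤ y a) →
      ∃ g₀ : P → ℤ, (∀ a, 0 ≤ g₀ a ∧ (g₀ a : ℝ) ≤ y a ∧ y a - g₀ a ≤ D) ∧
        ∀ (τ : T) (z : L → ℝ), (∀ l, 0 ≤ z l) →
          (∀ k, ∑ a, (A τ k a : ℝ) * y a + ∑ l, (B τ k l : ℝ) * z l = 0) →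
          ∃ g : L → ℤ, (∀ l, 0 ≤ g l ∧ (g l : ℝ) ≤ z l ∧ z l - g l ≤ D) ∧
            ∀ k, ∑ a, A τ k a * g₀ a + ∑ l, B τ k l * g l = 0 := by
  classical
  -- For a set `J` of block types: the system whose unknowns are a global vector `y` and vectors
  -- `v (τ, S)` for all `τ`, `S`, with `A τ y + B τ v (τ, S) = 0` imposed when `τ ∈ J`.
  let M : Finset T → ((T × Finset L) × K) → (P ⊕ (T × Finset L) × L) → ℤ := fun J rk c =>
    if rk.1.1 ∈ J then
      Sum.elim (fun a => A rk.1.1 rk.2 a)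
        (fun ql => if ql.1 = rk.1 then B rk.1.1 rk.2 ql.2 else 0) c
    else 0
  have hMsum : ∀ (J : Finset T) (τ : T) (S : Finset L) (k : K)
      (x : (P ⊕ (T × Finset L) × L) → ℝ), τ ∈ J →
      ∑ c, (M J ((τ, S), k) c : ℝ) * x c =
        ∑ a, (A τ k a : ℝ) * x (Sum.inl a) + ∑ l, (B τ k l : ℝ) * x (Sum.inr ((τ, S), l)) := by
    intro J τ S k x hτ
    rw [Fintype.sum_sum_type]
    congr 1
    · simp [M, hτ]
    · rw [Fintype.sum_prod_type, Finset.sum_eq_single (τ, S)]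
      · simp [M, hτ]
      · intro q _ hq
        simp [M, hτ, hq]
      · simp
  choose G hG0 hGM hGgen using fun J => exists_int_generators (M J)
  choose H hH0 hHB hHgen using fun τ => exists_int_generators (B τ)
  have hG0' : ∀ J C c, (0 : ℝ) ≤ G J C c := fun J C c => by exact_mod_cast hG0 J C c
  have hH0' : ∀ τ S l, (0 : ℝ) ≤ H τ S l := fun τ S l => by exact_mod_cast hH0 τ S l
  set N : ℕ := Fintype.card (Finset L) with hN
  set D₁ : ℝ := ∑ J, ∑ c, ∑ C, (G J C c : ℝ) with hD₁
  set D₂ : ℝ := ∑ τ, ∑ l, ∑ S, (H τ S l : ℝ) with hD₂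
  have hGle : ∀ J c, ∑ C, (G J C c : ℝ) ≤ D₁ := fun J c =>
    (Finset.single_le_sum (f := fun c => ∑ C, (G J C c : ℝ))
      (fun c _ => Finset.sum_nonneg fun C _ => hG0' J C c) (Finset.mem_univ c)).trans
    (Finset.single_le_sum (f := fun J => ∑ c, ∑ C, (G J C c : ℝ))
      (fun J _ => Finset.sum_nonneg fun c _ => Finset.sum_nonneg fun C _ => hG0' J C c)
      (Finset.mem_univ J))
  have hHle : ∀ τ l, ∑ S, (H τ S l : ℝ) ≤ D₂ := fun τ l =>
    (Finset.single_le_sum (f := fun l => ∑ S, (H τ S l : ℝ))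
      (fun c _ => Finset.sum_nonneg fun C _ => hH0' τ C c) (Finset.mem_univ l)).trans
    (Finset.single_le_sum (f := fun τ => ∑ l, ∑ S, (H τ S l : ℝ))
      (fun τ _ => Finset.sum_nonneg fun c _ => Finset.sum_nonneg fun C _ => hH0' τ C c)
      (Finset.mem_univ τ))
  have hD₁0 : 0 ≤ D₁ := Finset.sum_nonneg fun J _ => Finset.sum_nonneg fun c _ =>
    Finset.sum_nonneg fun C _ => hG0' J C c
  have hD₂0 : 0 ≤ D₂ := Finset.sum_nonneg fun J _ => Finset.sum_nonneg fun c _ =>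
    Finset.sum_nonneg fun C _ => hH0' J C c
  refine ⟨(N + 1) * D₁ + N * ((N + 1) * D₁) + D₂, fun y hy => ?_⟩
  let feasible : T → Prop := fun τ => ∃ z : L → ℝ, (∀ l, 0 ≤ z l) ∧
    ∀ k, ∑ l, (B τ k l : ℝ) * z l = - ∑ a, (A τ k a : ℝ) * y a
  have hv : ∀ τ, ∃ v : Finset L → L → ℝ, (∀ S l, 0 ≤ v S l) ∧ (feasible τ →
      (∀ S k, ∑ l, (B τ k l : ℝ) * v S l = - ∑ a, (A τ k a : ℝ) * y a) ∧
      ∀ z : L → ℝ, (∀ l, 0 ≤ z l) →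
        (∀ k, ∑ l, (B τ k l : ℝ) * z l = - ∑ a, (A τ k a : ℝ) * y a) →
        ∃ (μ : Finset L → ℝ) (d : L → ℝ), (∀ S, 0 ≤ μ S) ∧ ∑ S, μ S = 1 ∧ (∀ l, 0 ≤ d l) ∧
          (∀ k, ∑ l, (B τ k l : ℝ) * d l = 0) ∧ ∀ l, z l = ∑ S, μ S * v S l + d l) := by
    intro τ
    by_cases hτ : feasible τ
    · obtain ⟨v, h1, h2, h3⟩ := exists_fiber_vertices (fun k l => (B τ k l : ℝ))
        (fun k => - ∑ a, (A τ k a : ℝ) * y a) hτ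
      exact ⟨v, h1, fun _ => ⟨h2, h3⟩⟩
    · exact ⟨0, by simp, fun h => absurd h hτ⟩
  choose v hv0 hvf using hv
  set J : Finset T := Finset.univ.filter feasible with hJ
  obtain ⟨w, hw0, hw⟩ := hGgen J (Sum.elim y fun ql => v ql.1.1 ql.1.2 ql.2)
    (by rintro (a | ⟨⟨τ, S⟩, l⟩)
        · exact hy a
        · exact hv0 τ S l)
    (by rintro ⟨⟨τ, S⟩, k⟩
        by_cases hτ : τ ∈ J
        · rw [hMsum J τ S k _ hτ]
          have := ((hvf τ (by simpa [hJ] using hτ)).1 S k)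
          simp only [Sum.elim_inl, Sum.elim_inr, this]
          ring
        · simp [M, hτ])
  have hwy : ∀ a, y a = ∑ C, w C * G J C (Sum.inl a) := fun a => hw (Sum.inl a)
  have hwv : ∀ τ S l, v τ S l = ∑ C, w C * G J C (Sum.inr ((τ, S), l)) :=
    fun τ S l => hw (Sum.inr ((τ, S), l))
  have hn : ∀ C, ((⌊w C⌋₊ - N : ℕ) : ℝ) ≤ w C ∧ w C - ((⌊w C⌋₊ - N : ℕ) : ℝ) ≤ N + 1 := by
    intro C
    have h1 := Nat.floor_le (hw0 C)
    have h2 := Nat.lt_floor_add_one (w C)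
    constructor
    · exact (Nat.cast_le.2 (Nat.sub_le _ _)).trans h1
    · have : ⌊w C⌋₊ ≤ (⌊w C⌋₊ - N) + N := by omega
      have : (⌊w C⌋₊ : ℝ) ≤ ((⌊w C⌋₊ - N : ℕ) : ℝ) + N := by exact_mod_cast this
      linarith
  have hND : 0 ≤ (N : ℝ) * ((N + 1) * D₁) := by positivity
  have hND' : 0 ≤ ((N : ℝ) + 1) * D₁ := by positivity
  refine ⟨fun a => ∑ C, ((⌊w C⌋₊ - N : ℕ) : ℤ) * G J C (Sum.inl a), fun a => ⟨?_, ?_, ?_⟩, ?_⟩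
  · exact Finset.sum_nonneg fun C _ => mul_nonneg (by positivity) (hG0 J C _)
  · rw [hwy a]
    push_cast
    exact Finset.sum_le_sum fun C _ => mul_le_mul_of_nonneg_right (by exact_mod_cast (hn C).1)
      (hG0' J C _)
  · rw [hwy a]
    push_cast
    rw [← Finset.sum_sub_distrib]
    calc _ ≤ ∑ C, ((N : ℝ) + 1) * G J C (Sum.inl a) := Finset.sum_le_sum fun C _ => by
          rw [← sub_mul]
          exact mul_le_mul_of_nonneg_right (hn C).2 (hG0' J C _)
      _ = (N + 1) * ∑ C, (G J C (Sum.inl a) : ℝ) := by rw [Finset.mul_sum]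
      _ ≤ (N + 1) * D₁ := by gcongr; exact hGle J _
      _ ≤ _ := by linarith
  intro τ z hz hAB
  have hAB' : ∀ k, ∑ l, (B τ k l : ℝ) * z l = - ∑ a, (A τ k a : ℝ) * y a := fun k => by
    linarith [hAB k]
  have hfeas : feasible τ := ⟨z, hz, hAB'⟩
  have hτJ : τ ∈ J := by simpa [hJ] using hfeas
  obtain ⟨μ, d, hμ0, hμ1, hd0, hdB, hzd⟩ := (hvf τ hfeas).2 z hz hAB'
  obtain ⟨ρ, hρ0, hρ⟩ := hHgen τ d hd0 hdB
  choose m hmle hmsum using fun C => exists_rounding μ hμ0 hμ1 (w C) (hw0 C)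
  -- The coefficients `μ S * w C` of `z` are rounded down with total error `w C - (⌊w C⌋₊ - N)`.
  have hmN : ∀ C S, μ S * w C - m C S ≤ N + 1 := fun C S => by
    have h1 := Finset.single_le_sum (f := fun S => μ S * w C - m C S)
      (fun S _ => sub_nonneg.2 (hmle C S)) (Finset.mem_univ S)
    rw [Finset.sum_sub_distrib, ← Finset.sum_mul, hμ1, one_mul] at h1
    have h2 : ∑ S, (m C S : ℝ) = ((⌊w C⌋₊ - N : ℕ) : ℝ) := by exact_mod_cast hmsum C
    rw [h2] at h1
    exact h1.trans (hn C).2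
  have hz' : ∀ l, z l = ∑ S, ∑ C, μ S * w C * G J C (Sum.inr ((τ, S), l)) +
      ∑ S, ρ S * H τ S l := fun l => by
    rw [hzd l, hρ l]
    congr 1
    refine Finset.sum_congr rfl fun S _ => ?_
    rw [hwv, Finset.mul_sum]
    exact Finset.sum_congr rfl fun C _ => by ring
  refine ⟨fun l => ∑ S, ∑ C, (m C S : ℤ) * G J C (Sum.inr ((τ, S), l)) +
    ∑ S, (⌊ρ S⌋₊ : ℤ) * H τ S l, fun l => ⟨?_, ?_, ?_⟩, fun k => ?_⟩
  · exact add_nonneg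
      (Finset.sum_nonneg fun S _ => Finset.sum_nonneg fun C _ =>
        mul_nonneg (by positivity) (hG0 J C _))
      (Finset.sum_nonneg fun S _ => mul_nonneg (by positivity) (hH0 τ S l))
  · rw [hz' l]
    push_cast
    exact add_le_add
      (Finset.sum_le_sum fun S _ => Finset.sum_le_sum fun C _ =>
        mul_le_mul_of_nonneg_right (hmle C S) (hG0' J C _))
      (Finset.sum_le_sum fun S _ => mul_le_mul_of_nonneg_right (Nat.floor_le (hρ0 S)) (hH0' τ S l))
  · rw [hz' l]
    push_cast
    have h1 : ∑ S, ∑ C, μ S * w C * G J C (Sum.inr ((τ, S), l)) -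
        ∑ S, ∑ C, (m C S : ℝ) * G J C (Sum.inr ((τ, S), l)) ≤ N * ((N + 1) * D₁) := by
      rw [← Finset.sum_sub_distrib]
      calc _ ≤ ∑ S : Finset L, ((N : ℝ) + 1) * D₁ := Finset.sum_le_sum fun S _ => by
            rw [← Finset.sum_sub_distrib]
            calc _ ≤ ∑ C, ((N : ℝ) + 1) * G J C (Sum.inr ((τ, S), l)) :=
                  Finset.sum_le_sum fun C _ => by
                    rw [← sub_mul]
                    exact mul_le_mul_of_nonneg_right (hmN C S) (hG0' J C _)
              _ = (N + 1) * ∑ C, (G J C (Sum.inr ((τ, S), l)) : ℝ) := by rw [Finset.mul_sum]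
              _ ≤ (N + 1) * D₁ := by gcongr; exact hGle J _
        _ = N * ((N + 1) * D₁) := by
            rw [Finset.sum_const, nsmul_eq_mul, Finset.card_univ, hN]
    have h2 : ∑ S, ρ S * H τ S l - ∑ S, (⌊ρ S⌋₊ : ℝ) * H τ S l ≤ D₂ := by
      rw [← Finset.sum_sub_distrib]
      refine (Finset.sum_le_sum fun S _ => ?_).trans (hHle τ l)
      rw [← sub_mul]
      exact mul_le_of_le_one_left (hH0' τ S l) (by linarith [Nat.lt_floor_add_one (ρ S)])
    linarith
  · have hker : ∀ C S, ∑ l, B τ k l * G J C (Sum.inr ((τ, S), l)) =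
        - ∑ a, A τ k a * G J C (Sum.inl a) := fun C S => by
      have h1 : ∑ c, (M J ((τ, S), k) c : ℝ) * (G J C c : ℝ) = 0 := by
        exact_mod_cast hGM J C ((τ, S), k)
      rw [hMsum J τ S k (fun c => (G J C c : ℝ)) hτJ] at h1
      have h2 : ∑ a, A τ k a * G J C (Sum.inl a) +
        ∑ l, B τ k l * G J C (Sum.inr ((τ, S), l)) = 0 := by exact_mod_cast h1
      linarith
    have hA : ∑ a, A τ k a * ∑ C, ((⌊w C⌋₊ - N : ℕ) : ℤ) * G J C (Sum.inl a) =
        ∑ C, ((⌊w C⌋₊ - N : ℕ) : ℤ) * ∑ a, A τ k a * G J C (Sum.inl a) := by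
      simp only [Finset.mul_sum]
      rw [Finset.sum_comm]
      exact Finset.sum_congr rfl fun _ _ => Finset.sum_congr rfl fun _ _ => by ring
    have hB1 : ∑ l, B τ k l * ∑ S, ∑ C, (m C S : ℤ) * G J C (Sum.inr ((τ, S), l)) =
        ∑ C, ∑ S, (m C S : ℤ) * ∑ l, B τ k l * G J C (Sum.inr ((τ, S), l)) := by
      simp only [Finset.mul_sum]
      rw [Finset.sum_comm, Finset.sum_comm (s := (Finset.univ : Finset (Finset (P ⊕ _))))]
      refine Finset.sum_congr rfl fun _ _ => ?_
      rw [Finset.sum_comm]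
      exact Finset.sum_congr rfl fun _ _ => Finset.sum_congr rfl fun _ _ => by ring
    have hB2 : ∑ l, B τ k l * ∑ S, (⌊ρ S⌋₊ : ℤ) * H τ S l = 0 := by
      have : ∑ l, B τ k l * ∑ S, (⌊ρ S⌋₊ : ℤ) * H τ S l =
          ∑ S, (⌊ρ S⌋₊ : ℤ) * ∑ l, B τ k l * H τ S l := by
        simp only [Finset.mul_sum]
        rw [Finset.sum_comm]
        exact Finset.sum_congr rfl fun _ _ => Finset.sum_congr rfl fun _ _ => by ring
      rw [this]
      simp [hHB]
    simp only [mul_add, Finset.sum_add_distrib]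
    rw [hA, hB1, hB2, add_zero, ← Finset.sum_add_distrib]
    refine Finset.sum_eq_zero fun C _ => ?_
    simp only [hker]
    rw [← Finset.sum_mul, ← Nat.cast_sum, hmsum C]
    ring

/-! ### Reduction to nonnegative vectors -/

/-- every mixed-kernel element of a 2-stage stochastic matrix admits a
one-fat decomposition whose fat element has `∞`-norm bounded by a function of the
block dimensions `r, s, t` and `‖E‖∞` alone, independently of the number of blocks. -/
theorem twoStage_oneFat_bound :
    ∃ h' : ℕ → ℕ → ℕ → ℕ → ℕ,
      ∀ (n r s t : ℕ) (E : Matrix (Fin n × Fin t) (Fin r ⊕ Fin n × Fin s) ℤ),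
        (∀ (i : Fin n) (k : Fin t) (j : Fin n) (l : Fin s),
          j ≠ i → E (i, k) (Sum.inr (j, l)) = 0) →
        ∀ (I : Finset (Fin r ⊕ Fin n × Fin s)) (x : Fin r ⊕ Fin n × Fin s → ℝ),
          MixedKer E I x →
          ∃ h g : Fin r ⊕ Fin n × Fin s → ℝ, OneFatDecomp E I x h g ∧
            ∀ c, |h c| ≤ (h' r s t (matNormInf E) : ℝ) := by
  classical
  -- A block type is a pair of integer matrices with entries in `[-Δ, Δ]`.
  choose D hD using fun r s t Δ : ℕ => exists_uniform_rounding
    (Fin t → Fin r ⊕ Fin s → Set.Icc (-(Δ : ℤ)) Δ) (Fin r) (Fin s) (Fin t)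
    (fun τ k a => (τ k (Sum.inl a) : ℤ)) (fun τ k l => (τ k (Sum.inr l) : ℤ))
  refine ⟨fun r s t Δ => ⌈D r s t Δ⌉₊, ?_⟩
  intro n r s t E hE I x hx
  obtain ⟨hker, hint⟩ := hx
  set Δ := matNormInf E with hΔ
  -- Flipping the signs of columns by `ε` makes `x` nonnegative.
  set ε : Fin r ⊕ Fin n × Fin s → ℤ := fun c => if x c < 0 then -1 else 1 with hε
  have hεcases : ∀ c, (ε c = 1 ∧ 0 ≤ x c) ∨ (ε c = -1 ∧ x c < 0) := fun c => by
    by_cases h : x c < 0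
    · right; simp [hε, h]
    · left; simp [hε, h, not_lt.1 h]
  have hεε : ∀ c, ε c * ε c = 1 := fun c => by
    rcases hεcases c with ⟨h, -⟩ | ⟨h, -⟩ <;> rw [h] <;> norm_num
  have hεεR : ∀ c, (ε c : ℝ) * ε c = 1 := fun c => by exact_mod_cast hεε c
  have hEε : ∀ p c, E p c * ε c ∈ Set.Icc (-(Δ : ℤ)) Δ := fun p c => by
    have h1 : (E p c).natAbs ≤ Δ :=
      Finset.le_sup (f := fun q : (Fin n × Fin t) × (Fin r ⊕ Fin n × Fin s) =>
        (E q.1 q.2).natAbs) (Finset.mem_univ (p, c))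
    rw [Set.mem_Icc]
    rcases hεcases c with ⟨h, -⟩ | ⟨h, -⟩ <;> rw [h] <;> omega
  have hsum : ∀ (i : Fin n) (k : Fin t) (u : Fin r ⊕ Fin n × Fin s → ℝ),
      ∑ c, (E (i, k) c : ℝ) * u c = ∑ a, (E (i, k) (Sum.inl a) : ℝ) * u (Sum.inl a) +
        ∑ l, (E (i, k) (Sum.inr (i, l)) : ℝ) * u (Sum.inr (i, l)) := by
    intro i k u
    rw [Fintype.sum_sum_type, Fintype.sum_prod_type]
    congr 1
    refine Finset.sum_eq_single i (fun j _ hj => ?_) (by simp)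
    exact Finset.sum_eq_zero fun l _ => by rw [hE i k j l hj]; simp
  have hker' : ∀ i k, ∑ c, (E (i, k) c : ℝ) * x c = 0 := fun i k => congrFun hker (i, k)
  have hxε : ∀ c, 0 ≤ ε c * x c := fun c => by
    rcases hεcases c with ⟨h, h'⟩ | ⟨h, h'⟩ <;> rw [h] <;> push_cast <;> linarith
  let τ : Fin n → Fin t → Fin r ⊕ Fin s → Set.Icc (-(Δ : ℤ)) Δ := fun i k c =>
    Sum.elim (fun a => ⟨_, hEε (i, k) (Sum.inl a)⟩)
      (fun l => ⟨_, hEε (i, k) (Sum.inr (i, l))⟩) c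
  obtain ⟨g₀, hg₀, hloc⟩ := hD r s t Δ (fun a => ε (Sum.inl a) * x (Sum.inl a))
    (fun a => hxε _)
  choose g hg hgker using fun i => hloc (τ i) (fun l => ε (Sum.inr (i, l)) * x (Sum.inr (i, l)))
    (fun l => hxε _) (fun k => by
      rw [← hker' i k, hsum]
      congr 1
      · refine Finset.sum_congr rfl fun a _ => ?_
        simp only [τ, Sum.elim_inl]
        push_cast
        linear_combination (E (i, k) (Sum.inl a) * x (Sum.inl a) : ℝ) * hεεR (Sum.inl a)
      · refine Finset.sum_congr rfl fun l _ => ?_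
        simp only [τ, Sum.elim_inr]
        push_cast
        linear_combination (E (i, k) (Sum.inr (i, l)) * x (Sum.inr (i, l)) : ℝ) *
          hεεR (Sum.inr (i, l)))
  let γ : Fin r ⊕ Fin n × Fin s → ℤ := Sum.elim g₀ fun p => g p.1 p.2
  have hγ : ∀ c, 0 ≤ γ c ∧ (γ c : ℝ) ≤ ε c * x c ∧ ε c * x c - γ c ≤ D r s t Δ := by
    rintro (a | ⟨i, l⟩)
    · exact hg₀ a
    · exact hg i l
  have hγker : (E.map (Int.cast : ℤ → ℝ)).mulVec (fun c => ((ε c * γ c : ℤ) : ℝ)) = 0 := by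
    funext ⟨i, k⟩
    change ∑ c, (E (i, k) c : ℝ) * ((ε c * γ c : ℤ) : ℝ) = 0
    rw [hsum]
    have h1 := hgker i k
    simp only [τ, Sum.elim_inl, Sum.elim_inr] at h1
    have h2 : ∑ a, E (i, k) (Sum.inl a) * (ε (Sum.inl a) * γ (Sum.inl a)) +
        ∑ l, E (i, k) (Sum.inr (i, l)) * (ε (Sum.inr (i, l)) * γ (Sum.inr (i, l))) = 0 := by
      simpa only [γ, Sum.elim_inl, Sum.elim_inr, mul_assoc] using h1
    exact_mod_cast h2
  have hfacts : ∀ c, |x c - ((ε c * γ c : ℤ) : ℝ)| ≤ |x c| ∧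
      0 ≤ (x c - ((ε c * γ c : ℤ) : ℝ)) * x c ∧
      |((ε c * γ c : ℤ) : ℝ)| ≤ |x c| ∧ 0 ≤ ((ε c * γ c : ℤ) : ℝ) * x c ∧
      |x c - ((ε c * γ c : ℤ) : ℝ)| ≤ D r s t Δ := by
    intro c
    obtain ⟨h1, h2, h3⟩ := hγ c
    have h1' : (0 : ℝ) ≤ γ c := by exact_mod_cast h1
    rcases hεcases c with ⟨h, h'⟩ | ⟨h, h'⟩
    · rw [h] at h2 h3 ⊢
      push_cast at h2 h3 ⊢
      rw [abs_of_nonneg h', abs_of_nonneg (by linarith), abs_of_nonneg (by linarith)]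
      refine ⟨by linarith, mul_nonneg (by linarith) h', by linarith, mul_nonneg (by linarith) h',
        by linarith⟩
    · rw [h] at h2 h3 ⊢
      push_cast at h2 h3 ⊢
      rw [abs_of_neg h', abs_of_nonpos (by linarith), abs_of_nonpos (by linarith)]
      refine ⟨by linarith, mul_nonneg_of_nonpos_of_nonpos (by linarith) h'.le, by linarith,
        mul_nonneg_of_nonpos_of_nonpos (by linarith) h'.le, by linarith⟩
  refine ⟨x - fun c => ((ε c * γ c : ℤ) : ℝ), fun c => ((ε c * γ c : ℤ) : ℝ),
    ⟨by simp, fun c => ⟨(hfacts c).1, (hfacts c).2.1⟩,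
      fun c => ⟨(hfacts c).2.2.1, (hfacts c).2.2.2.1⟩, ⟨?_, fun c hc => ?_⟩, hγker,
      fun c => ⟨_, rfl⟩⟩, fun c => ?_⟩
  · rw [Matrix.mulVec_sub, hker, hγker, sub_zero]
  · obtain ⟨q, hq⟩ := hint c hc
    exact ⟨q - ε c * γ c, by simp [hq]⟩
  · exact (hfacts c).2.2.2.2.trans (Nat.le_ceil _)
end

section
/- There exists a function h' : ℕ⁴ → ℕ such that the following holds. Consider a mixed-integer program whose constraint matrix E is a 2-stage stochastic matrix with n blocks and block dimensions r, s, t, with finite bounds l ≤ u, any set I of integral coordinates, and separable convex objective f. If z* is an integral optimum of the program, then there exists a mixed optimum x* with ‖z* − x*‖∞ ≤ h'(r, s, t, ‖E‖∞). -/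
/-!
Let `x` be the mixed optimum closest to `z` in the `ℓ₁`-norm (`exists_closest_optimum`) and
`d = x - z`, a real kernel vector of `E`. If some nonzero integral kernel vector `g` is conformal to
`d`, then `z + g` and `x - g` are feasible, and separable convexity gives
`f (z + g) + f (x - g) ≤ f z + f x`; as `z` is an integral optimum, `x - g` is a mixed optimum closer
to `z`, a contradiction. So it suffices that a real kernel vector with a large entry always dominates
such a `g` (`exists_conformal_integral_ker`), with a threshold that depends only on `r, s, t, ‖E‖∞`.

The main tool is that the real kernel of an integer matrix is generated, by nonnegative combinations
without cancellation, by finitely many integral kernel vectors (`exists_conformal_generators`). As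
there are finitely many possible blocks `(A_i B_i)`, one finite set `S` of generators serves all of
them. Each restriction `(d_0, d_i)` is thus a conformal combination `∑ g, λ_i(g) g` over `S`.

Suppose `d_0` is large. Let `J_i` be the set of generators with `λ_i(g) ≥ M₀`. Then `d_0` is within a
bounded distance of each cone spanned by the global parts of `J_i`, and only boundedly many sets
`J_i` occur. The system expressing this is an integer linear system of bounded size, so applying the
generation result to it yields a nonzero integral point `v` in all these cones at once, with natural
coefficients that are bounded independently of the distance (`exists_common_sum`); `M₀` is that bound.
Hence the coefficients of `v` over `J_i` are at most `λ_i`, and they lift `v` to an integral kernel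
vector conformal to `d`. If `d_0` is bounded but some `d_i` is large, a generator with zero global part
has coefficient at least one in block `i`, and it serves as `g`.
-/

open Matrix BigOperators

/-! ### Integral generators of real kernels -/

/-- Integral vectors in the kernel of an integer matrix, the matrix being written as a plain
function of row and column. -/
def IntKer {R C : Type*} [Fintype C] (M : R → C → ℤ) (g : C → ℤ) : Prop :=
  ∀ k, ∑ c, M k c * g c = 0

/-- Real vectors in the kernel of an integer matrix. -/
def RealKer {R C : Type*} [Fintype C] (M : R → C → ℤ) (y : C → ℝ) : Prop :=
  ∀ k, ∑ c, (M k c : ℝ) * y c = 0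

/-- Every nonzero entry of `g` has the sign of the corresponding (nonzero) entry of `y`: `g` lies in
the minimal closed orthant face containing `y`. Unlike in `ConformalTo`, magnitudes are free. -/
def SignConf {C : Type*} (g : C → ℤ) (y : C → ℝ) : Prop :=
  ∀ c, 0 ≤ (g c : ℝ) * y c ∧ (y c = 0 → g c = 0)

/-- The rational kernel realises every sign pattern of the real kernel. In a `ℚ`-basis `b` of the span
of the entries, `y = ∑ j, b j • a j` with all `a j` rational kernel vectors; replacing the reals
`b j` by close rationals keeps the signs, and zero entries of `y` are zero in every `a j`. -/
theorem exists_rat_ker_sign {R C : Type*} [Fintype C] (M : R → C → ℤ) (y : C → ℝ)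
    (hy : RealKer M y) :
    ∃ q : C → ℚ, (∀ k, ∑ c, (M k c : ℚ) * q c = 0) ∧
      ∀ c, SignType.sign (q c) = SignType.sign (y c) := by
  classical
  let V := Submodule.span ℚ (Set.range y)
  have : Module.Finite ℚ V := Module.Finite.span_of_finite ℚ (Set.finite_range y)
  let b := Module.finBasis ℚ V
  let w : C → V := fun c => ⟨y c, Submodule.subset_span ⟨c, rfl⟩⟩
  let m := Module.finrank ℚ V
  let a : C → Fin m → ℚ := fun c j => b.repr (w c) j
  have hya : ∀ c, y c = ∑ j, (a c j : ℝ) * (b j : ℝ) := by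
    intro c
    have h := congrArg (Subtype.val) (b.sum_repr (w c))
    rw [Submodule.coe_sum] at h
    rw [show y c = ((w c : V) : ℝ) from rfl, ← h]
    refine Finset.sum_congr rfl fun j _ => ?_
    rw [Submodule.coe_smul, Rat.smul_def]
  have hker : ∀ k j, ∑ c, (M k c : ℚ) * a c j = 0 := by
    intro k j
    have h0 : ∑ c, (M k c : ℚ) • w c = 0 := by
      apply Subtype.ext
      rw [Submodule.coe_sum]
      have := hy k
      simpa [Rat.smul_def, w] using this
    have h1 := congrArg (fun x => b.repr x j) h0
    simpa [map_sum, Finsupp.finsetSum_apply] using h1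
  have hopen : IsOpen {β : Fin m → ℝ | ∀ c, y c ≠ 0 →
      0 < (∑ j, (a c j : ℝ) * β j) * y c} := by
    simp only [Set.ofPred_forall]
    refine isOpen_iInter_of_finite fun c => ?_
    refine isOpen_iInter_of_finite fun _ => ?_
    exact isOpen_lt continuous_const (by fun_prop)
  have hdense : DenseRange (fun (q : Fin m → ℚ) (j : Fin m) => (q j : ℝ)) :=
    DenseRange.piMap fun _ => Rat.denseRange_cast
  obtain ⟨β, hβ⟩ := hdense.exists_mem_open hopen ⟨fun j => (b j : ℝ), by
    intro c hc
    rw [← hya c]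
    exact mul_self_pos.mpr hc⟩
  refine ⟨fun c => ∑ j, a c j * β j, ?_, ?_⟩
  · intro k
    simp_rw [Finset.mul_sum]
    rw [Finset.sum_comm]
    refine Finset.sum_eq_zero fun j _ => ?_
    simp_rw [← mul_assoc]
    rw [← Finset.sum_mul, hker, zero_mul]
  · intro c
    by_cases hc : y c = 0
    · have hw : w c = 0 := Subtype.ext hc
      simp [a, hw, hc]
    · have h := hβ c hc
      have h' : (∑ j, (a c j : ℝ) * ((β j : ℚ) : ℝ)) = ((∑ j, a c j * β j : ℚ) : ℝ) := by
        push_cast; rfl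
      rw [h'] at h
      rcases lt_or_gt_of_ne hc with hn | hp
      · have : ((∑ j, a c j * β j : ℚ) : ℝ) < 0 := by
          by_contra hcon
          nlinarith
        rw [sign_neg hn, sign_neg (by exact_mod_cast this)]
      · have : 0 < ((∑ j, a c j * β j : ℚ) : ℝ) := by
          by_contra hcon
          nlinarith
        rw [sign_pos hp, sign_pos (by exact_mod_cast this)]

/-- The integral kernel realises every sign pattern of the real kernel: clear denominators. -/
theorem exists_int_ker_sign {R C : Type*} [Fintype C] (M : R → C → ℤ) (y : C → ℝ)
    (hy : RealKer M y) :
    ∃ g : C → ℤ, IntKer M g ∧ ∀ c, SignType.sign (g c) = SignType.sign (y c) := by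
  classical
  obtain ⟨q, hq, hs⟩ := exists_rat_ker_sign M y hy
  let D : ℕ := ∏ c, (q c).den
  have hD : (0 : ℚ) < D := by
    have : 0 < D := Finset.prod_pos fun c _ => (q c).den_pos
    exact_mod_cast this
  have hIntegral : ∀ c, ∃ z : ℤ, (z : ℚ) = D * q c := by
    intro c
    refine ⟨(∏ c' ∈ Finset.univ.erase c, (q c').den : ℕ) * (q c).num, ?_⟩
    have h1 : D = (∏ c' ∈ Finset.univ.erase c, (q c').den) * (q c).den :=
      (Finset.prod_erase_mul _ _ (Finset.mem_univ c)).symm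
    rw [h1]
    push_cast
    rw [mul_assoc, mul_comm ((q c).den : ℚ), Rat.mul_den_eq_num]
  choose g hg using hIntegral
  refine ⟨g, ?_, ?_⟩
  · intro k
    have : ((∑ c, M k c * g c : ℤ) : ℚ) = 0 := by
      push_cast
      simp_rw [hg]
      calc ∑ c, (M k c : ℚ) * (D * q c) = D * ∑ c, (M k c : ℚ) * q c := by
            rw [Finset.mul_sum]; exact Finset.sum_congr rfl fun c _ => by ring
        _ = 0 := by rw [hq, mul_zero]
    exact_mod_cast this
  · intro c
    rw [← hs c]
    have h1 : SignType.sign (g c) = SignType.sign ((g c : ℚ)) := by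
      rcases lt_trichotomy (g c) 0 with h | h | h
      · rw [sign_neg h, sign_neg (by exact_mod_cast h)]
      · simp [h]
      · rw [sign_pos h, sign_pos (by exact_mod_cast h)]
    rw [h1, hg, sign_mul, sign_pos hD, one_mul]

/-- Finitely many integral kernel vectors generate the real kernel by nonnegative combinations without
cancellation. One representative per sign pattern suffices: subtracting from `y` the largest multiple
of the representative of its own pattern that stays conformal kills an entry of `y`. -/
theorem exists_conformal_generators {R C : Type*} [Fintype C] (M : R → C → ℤ) :
    ∃ S : Finset (C → ℤ), ∀ y : C → ℝ, RealKer M y →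
      ∃ lam : (C → ℤ) → ℝ, (∀ g, 0 ≤ lam g) ∧
        (∀ g, lam g ≠ 0 → g ∈ S ∧ IntKer M g ∧ SignConf g y) ∧
        ∀ c, y c = ∑ g ∈ S, lam g * g c := by
  classical
  have hch : ∀ σ : C → SignType, ∃ g : C → ℤ,
      (∃ g' : C → ℤ, IntKer M g' ∧ ∀ c, SignType.sign (g' c) = σ c) →
        IntKer M g ∧ ∀ c, SignType.sign (g c) = σ c := by
    intro σ
    by_cases h : ∃ g' : C → ℤ, IntKer M g' ∧ ∀ c, SignType.sign (g' c) = σ c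
    · obtain ⟨g, hg⟩ := h
      exact ⟨g, fun _ => hg⟩
    · exact ⟨0, fun h' => absurd h' h⟩
  choose G hG using hch
  refine ⟨Finset.univ.image G, ?_⟩
  suffices H : ∀ (N : ℕ) (y : C → ℝ), (Finset.univ.filter fun c => y c ≠ 0).card ≤ N →
      RealKer M y → ∃ lam : (C → ℤ) → ℝ, (∀ g, 0 ≤ lam g) ∧
        (∀ g, lam g ≠ 0 → g ∈ Finset.univ.image G ∧ IntKer M g ∧ SignConf g y) ∧
        ∀ c, y c = ∑ g ∈ Finset.univ.image G, lam g * g c from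
    fun y hy => H _ y le_rfl hy
  intro N
  induction N with
  | zero =>
    intro y hcard _
    refine ⟨0, fun _ => le_rfl, fun g hg => absurd rfl hg, fun c => ?_⟩
    have : c ∉ Finset.univ.filter fun c => y c ≠ 0 := by
      rw [Finset.card_eq_zero.mp (Nat.le_zero.mp hcard)]; simp
    simpa using this
  | succ N ih =>
    intro y hcard hy
    by_cases hne : (Finset.univ.filter fun c => y c ≠ 0).Nonempty
    swap
    · exact ih y (by rw [Finset.not_nonempty_iff_eq_empty.mp hne]; simp) hy
    obtain ⟨hgk, hgs⟩ := hG (fun c => SignType.sign (y c)) (exists_int_ker_sign M y hy)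
    set g := G (fun c => SignType.sign (y c)) with hgdef
    -- `θ = y c₀ / g c₀` is the largest multiple of `g` that can be subtracted without a sign change
    obtain ⟨c₀, hc₀, hmin⟩ := Finset.exists_min_image _ (fun c => y c / (g c : ℝ)) hne
    have hc₀' : y c₀ ≠ 0 := by simpa using hc₀
    have hneg : ∀ c, y c < 0 → (g c : ℝ) < 0 := by
      intro c hc
      have := hgs c
      rw [sign_neg hc, sign_eq_neg_one_iff] at this
      exact_mod_cast this
    have hpos : ∀ c, 0 < y c → 0 < (g c : ℝ) := by
      intro c hc
      have := hgs c
      rw [sign_pos hc, sign_eq_one_iff] at this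
      exact_mod_cast this
    have hzero : ∀ c, y c = 0 → g c = 0 := by
      intro c hc
      have := hgs c
      rwa [hc, sign_zero, sign_eq_zero_iff] at this
    have hratio : ∀ c, y c ≠ 0 → 0 < y c / (g c : ℝ) := by
      intro c hc
      rcases lt_or_gt_of_ne hc with h | h
      · exact div_pos_of_neg_of_neg h (hneg c h)
      · exact div_pos h (hpos c h)
    set θ := y c₀ / (g c₀ : ℝ) with hθ
    have hθpos : 0 < θ := hratio c₀ hc₀'
    let y' : C → ℝ := fun c => y c - θ * g c
    have hy'zero : ∀ c, y c = 0 → y' c = 0 := by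
      intro c hc
      simp [y', hc, hzero c hc]
    have hy'neg : ∀ c, y c < 0 → y' c ≤ 0 := by
      intro c hc
      have h1 := hmin c (by simp [hc.ne])
      have h2 := (le_div_iff_of_neg (hneg c hc)).mp h1
      simp only [y']; linarith
    have hy'pos : ∀ c, 0 < y c → 0 ≤ y' c := by
      intro c hc
      have h1 := hmin c (by simp [hc.ne'])
      have h2 := (le_div_iff₀ (hpos c hc)).mp h1
      simp only [y']; linarith
    have hg₀ : (g c₀ : ℝ) ≠ 0 := by
      rcases lt_or_gt_of_ne hc₀' with h | h
      · exact (hneg _ h).ne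
      · exact (hpos _ h).ne'
    have hcard' : (Finset.univ.filter fun c => y' c ≠ 0).card ≤ N := by
      apply Nat.le_of_lt_succ
      refine lt_of_lt_of_le (Finset.card_lt_card ?_) hcard
      refine Finset.ssubset_iff_of_subset ?_ |>.mpr ⟨c₀, hc₀, ?_⟩
      · intro c hc
        simp only [Finset.mem_filter, Finset.mem_univ, true_and] at hc ⊢
        exact fun h => hc (hy'zero c h)
      · simp only [Finset.mem_filter, Finset.mem_univ, true_and, not_not, y', hθ]
        field_simp
        ring
    have hker' : RealKer M y' := by
      intro k
      have h1 := hy k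
      have h2 : ∑ c, (M k c : ℝ) * (g c : ℝ) = 0 := by exact_mod_cast hgk k
      calc ∑ c, (M k c : ℝ) * y' c
          = ∑ c, (M k c : ℝ) * y c - θ * ∑ c, (M k c : ℝ) * (g c : ℝ) := by
            rw [Finset.mul_sum, ← Finset.sum_sub_distrib]
            exact Finset.sum_congr rfl fun c _ => by simp only [y']; ring
        _ = 0 := by rw [h1, h2]; ring
    obtain ⟨lam, hl0, hlS, hly⟩ := ih y' hcard' hker'
    refine ⟨fun x => lam x + if x = g then θ else 0, ?_, ?_, ?_⟩
    · intro x
      have := hl0 x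
      dsimp only
      split_ifs <;> linarith
    · intro x hx
      by_cases hxg : x = g
      · subst hxg
        refine ⟨Finset.mem_image_of_mem _ (Finset.mem_univ _), hgk, fun c => ⟨?_, hzero c⟩⟩
        rcases lt_trichotomy (y c) 0 with h | h | h
        · exact (mul_pos_of_neg_of_neg (hneg c h) h).le
        · simp [h]
        · exact (mul_pos (hpos c h) h).le
      · simp only [hxg, if_false, add_zero] at hx
        obtain ⟨h1, h2, h3⟩ := hlS x hx
        refine ⟨h1, h2, fun c => ⟨?_, fun h => (h3 c).2 (hy'zero c h)⟩⟩
        by_cases hz : y' c = 0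
        · simp [(h3 c).2 hz]
        · have h4 := (h3 c).1
          rcases lt_trichotomy (y c) 0 with h | h | h
          · have h5 := lt_of_le_of_ne (hy'neg c h) hz
            have : (x c : ℝ) ≤ 0 := by
              by_contra hcon; push Not at hcon; nlinarith
            exact mul_nonneg_of_nonpos_of_nonpos this h.le
          · simp [h]
          · have h5 := lt_of_le_of_ne (hy'pos c h) (Ne.symm hz)
            have : 0 ≤ (x c : ℝ) := by
              by_contra hcon; push Not at hcon; nlinarith
            exact mul_nonneg this h.le
    · intro c
      have hmem : g ∈ Finset.univ.image G := Finset.mem_image_of_mem _ (Finset.mem_univ _)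
      simp_rw [add_mul, Finset.sum_add_distrib, ite_mul, zero_mul]
      rw [Finset.sum_ite_eq' , if_pos hmem, ← hly c]
      simp [y']

/-! ### Conformal decompositions -/

/-- `y = ∑ g ∈ S, lam g • g` with nonnegative coefficients, where every `g` with `lam g ≠ 0` is an
integral kernel vector of `M` with signs as in `y`; hence there is no cancellation in the sum. -/
def ConfDecomp {R C : Type*} [Fintype C] (M : R → C → ℤ) (S : Finset (C → ℤ)) (y : C → ℝ)
    (lam : (C → ℤ) → ℝ) : Prop :=
  (∀ g, 0 ≤ lam g) ∧ (∀ g, lam g ≠ 0 → IntKer M g ∧ SignConf g y) ∧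
    ∀ c, y c = ∑ g ∈ S, lam g * g c

/-- Lowering the coefficients of a conformal decomposition, keeping them nonnegative, yields
a vector conformal to `y`. -/
theorem ConfDecomp.sub_conformal {R C : Type*} [Fintype C] {M : R → C → ℤ}
    {S : Finset (C → ℤ)} {y : C → ℝ} {lam : (C → ℤ) → ℝ} (h : ConfDecomp M S y lam)
    (nu : (C → ℤ) → ℝ) (h0 : ∀ g ∈ S, 0 ≤ nu g) (h1 : ∀ g ∈ S, nu g ≤ lam g) (c : C) :
    |∑ g ∈ S, nu g * g c| ≤ |y c| ∧ 0 ≤ (∑ g ∈ S, nu g * g c) * y c := by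
  obtain ⟨hl, hg, hy⟩ := h
  have hterm : ∀ g, lam g ≠ 0 → 0 ≤ (g c : ℝ) * y c := fun g hne => ((hg g hne).2 c).1
  have hzero : ∀ g ∈ S, lam g = 0 → nu g = 0 := fun g hS h =>
    le_antisymm (h ▸ h1 g hS) (h0 g hS)
  have hxy : 0 ≤ (∑ g ∈ S, nu g * g c) * y c := by
    rw [Finset.sum_mul]
    refine Finset.sum_nonneg fun g hS => ?_
    by_cases hz : lam g = 0
    · simp [hzero g hS hz]
    · rw [mul_assoc]; exact mul_nonneg (h0 g hS) (hterm g hz)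
  have hle : (∑ g ∈ S, nu g * g c) * y c ≤ y c * y c := by
    nth_rewrite 2 [hy c]
    rw [Finset.sum_mul, Finset.sum_mul]
    refine Finset.sum_le_sum fun g hS => ?_
    by_cases hz : lam g = 0
    · simp [hzero g hS hz, hz]
    · rw [mul_assoc, mul_assoc]; exact mul_le_mul_of_nonneg_right (h1 g hS) (hterm g hz)
  refine ⟨?_, hxy⟩
  by_cases hyc : y c = 0
  · have : ∑ g ∈ S, nu g * g c = 0 := Finset.sum_eq_zero fun g hS => by
      by_cases hz : lam g = 0
      · simp [hzero g hS hz]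
      · simp [((hg g hz).2 c).2 hyc]
    simp [this]
  · rw [← abs_of_nonneg hxy, abs_mul, ← abs_mul_abs_self (y c)] at hle
    exact le_of_mul_le_mul_right hle (abs_pos.mpr hyc)

theorem ConfDecomp.term_le {R C : Type*} [Fintype C] {M : R → C → ℤ}
    {S : Finset (C → ℤ)} {y : C → ℝ} {lam : (C → ℤ) → ℝ} (h : ConfDecomp M S y lam)
    {g : C → ℤ} (hg : g ∈ S) (c : C) : lam g * |(g c : ℝ)| ≤ |y c| := by
  classical
  have := (h.sub_conformal (fun x => if x = g then lam g else 0)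
    (fun x _ => by split_ifs; exacts [h.1 g, le_rfl])
    (fun x _ => by split_ifs with hx; exacts [by rw [hx], h.1 x]) c).1
  simpa [ite_mul, hg, abs_mul, abs_of_nonneg (h.1 g)] using this

/-- A large entry of `y` forces a generator with a large coefficient that is nonzero at that entry. -/
theorem ConfDecomp.exists_large {R C : Type*} [Fintype C] {M : R → C → ℤ}
    {S : Finset (C → ℤ)} {y : C → ℝ} {lam : (C → ℤ) → ℝ} (h : ConfDecomp M S y lam)
    {B : ℝ} (hB : ∀ g ∈ S, ∀ c, |(g c : ℝ)| ≤ B) {T : ℝ} (hT : 0 ≤ T)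
    {c : C} (hc : S.card * (T * B) < |y c|) :
    ∃ g ∈ S, g c ≠ 0 ∧ T < lam g := by
  by_contra hcon
  push Not at hcon
  refine absurd hc (not_lt.mpr ?_)
  rw [h.2.2 c, ← nsmul_eq_mul]
  refine (Finset.abs_sum_le_sum_abs _ _).trans (Finset.sum_le_card_nsmul _ _ _ fun g hg => ?_)
  rw [abs_mul, abs_of_nonneg (h.1 g)]
  by_cases hz : g c = 0
  · have : 0 ≤ B := (abs_nonneg _).trans (hB g hg c)
    simp only [hz, Int.cast_zero, abs_zero, mul_zero]
    exact mul_nonneg hT this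
  · exact mul_le_mul (hcon g hg hz) (hB g hg c) (abs_nonneg _) hT

theorem exists_entry_bound {C : Type*} [Fintype C] (S : Finset (C → ℤ)) :
    ∃ B : ℕ, 1 ≤ B ∧ ∀ g ∈ S, ∀ c, |(g c : ℝ)| ≤ (B : ℝ) := by
  refine ⟨(S.sup fun g => Finset.univ.sup fun c => (g c).natAbs) + 1, by omega, ?_⟩
  intro g hg c
  have h1 : (g c).natAbs ≤ S.sup fun g => Finset.univ.sup fun c => (g c).natAbs :=
    (Finset.le_sup (f := fun c => (g c).natAbs) (Finset.mem_univ c)).trans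
      (Finset.le_sup (f := fun g : C → ℤ => Finset.univ.sup fun c => (g c).natAbs) hg)
  rw [← Int.cast_abs, Int.abs_eq_natAbs]
  exact_mod_cast h1.trans (Nat.le_succ _)

theorem exists_confDecomp {R C : Type*} [Fintype C] (M : R → C → ℤ) :
    ∃ S : Finset (C → ℤ), ∀ y : C → ℝ, RealKer M y → ∃ lam, ConfDecomp M S y lam := by
  obtain ⟨S, hS⟩ := exists_conformal_generators M
  refine ⟨S, fun y hy => ?_⟩
  obtain ⟨lam, h1, h2, h3⟩ := hS y hy
  exact ⟨lam, h1, fun g hg => (h2 g hg).2, h3⟩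

/-- One finite set of generators serves all matrices of given shape with entries at most `Δ`, since
there are only finitely many of them. -/
theorem exists_uniform_generators (R C : Type*) [Fintype R] [Fintype C] (Δ : ℕ) :
    ∃ S : Finset (C → ℤ), ∀ A : R → C → ℤ, (∀ k c, (A k c).natAbs ≤ Δ) →
      ∀ y : C → ℝ, RealKer A y → ∃ lam, ConfDecomp A S y lam := by
  classical
  choose S hS using fun A : R → C → ℤ => exists_conformal_generators A
  let Z := ↥(Finset.Icc (-(Δ : ℤ)) Δ)
  refine ⟨(Finset.univ : Finset (R → C → Z)).biUnion fun A => S fun k c => (A k c : ℤ), ?_⟩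
  intro A hA y hy
  obtain ⟨lam, h1, h2, h3⟩ := hS A y hy
  refine ⟨lam, h1, fun g hg => (h2 g hg).2, fun c => ?_⟩
  rw [h3 c]
  refine Finset.sum_subset ?_ ?_
  · intro g hg
    refine Finset.mem_biUnion.mpr ⟨fun k c => ⟨A k c, ?_⟩, Finset.mem_univ _, hg⟩
    have := hA k c
    rw [Finset.mem_Icc]; omega
  · intro g _ hg
    have : lam g = 0 := by
      by_contra hne
      exact hg (h2 g hne).1
    simp [this]

/-! ### A common point of several cones -/

/-- The integer matrix of the system `d = ∑ g, lam J g • a g + e J` for `J : P`, in the unknowns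
`d : ρ → ℝ`, `lam : P → σ → ℝ` and the error terms `e : P → ρ → ℝ`. -/
def couplingMatrix {P ρ σ : Type*} [DecidableEq P] [DecidableEq ρ] (a : σ → ρ → ℤ) :
    P × ρ → ρ ⊕ (P × σ) ⊕ (P × ρ) → ℤ := fun k =>
  Sum.elim (fun c => if c = k.2 then 1 else 0)
    (Sum.elim (fun p => if p.1 = k.1 then -a p.2 k.2 else 0) (fun p => if p = k then -1 else 0))

theorem couplingMatrix_row {P ρ σ A : Type*} [Fintype P] [Fintype ρ] [Fintype σ]
    [DecidableEq P] [DecidableEq ρ] [CommRing A] (a : σ → ρ → ℤ)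
    (y : ρ ⊕ (P × σ) ⊕ (P × ρ) → A) (J : P) (c : ρ) :
    ∑ x, (couplingMatrix a (J, c) x : A) * y x =
      y (.inl c) - ∑ g, y (.inr (.inl (J, g))) * a g c - y (.inr (.inr (J, c))) := by
  rw [Fintype.sum_sum_type, Fintype.sum_sum_type]
  have h1 : ∑ x : ρ, (couplingMatrix (P := P) a (J, c) (.inl x) : A) * y (.inl x) = y (.inl c) := by
    simp [couplingMatrix]
  have h2 : ∑ x : P × σ, (couplingMatrix a (J, c) (.inr (.inl x)) : A) * y (.inr (.inl x)) =
      - ∑ g, y (.inr (.inl (J, g))) * a g c := by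
    rw [Fintype.sum_prod_type, Finset.sum_eq_single J]
    · rw [← Finset.sum_neg_distrib]
      refine Finset.sum_congr rfl fun g _ => ?_
      simp [couplingMatrix, mul_comm]
    · intro J' _ hJ
      simp [couplingMatrix, hJ]
    · simp
  have h3 : ∑ x : P × ρ, (couplingMatrix a (J, c) (.inr (.inr x)) : A) * y (.inr (.inr x)) =
      - y (.inr (.inr (J, c))) := by
    rw [Finset.sum_eq_single (J, c)]
    · simp [couplingMatrix]
    · intro x _ hx
      simp [couplingMatrix, hx]
    · simp
  rw [h1, h2, h3]; ring

/-- If `d` lies within `K` of a point `∑ g, lam J g • a g` of each of the cones indexed by `J ∈ F` and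
`d` is large in terms of `K`, then these cones share a nonzero integral point `v`, with natural
coefficients supported where `lam J` is and bounded by a constant `M₀` that does not depend on `K`.
Indeed `(d, lam, e)` is in the kernel of `couplingMatrix a`; generators touching an error term of
some `J ∈ F` have coefficient at most `K`, so some generator with zero error and nonzero `d`-part
occurs. -/
theorem exists_common_sum {P ρ σ : Type*} [Fintype P] [Fintype ρ] [Fintype σ]
    (a : σ → ρ → ℤ) :
    ∃ M₀ : ℕ, 1 ≤ M₀ ∧ ∀ K : ℝ, 0 ≤ K → ∃ H : ℝ, 0 ≤ H ∧
      ∀ (d : ρ → ℝ) (F : Set P) (lam : P → σ → ℝ),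
        (∀ J ∈ F, ∀ g, 0 ≤ lam J g) →
        (∀ J ∈ F, ∀ c, |d c - ∑ g, lam J g * a g c| ≤ K) →
        (∃ c, H < |d c|) →
        ∃ v : ρ → ℤ, v ≠ 0 ∧ ∃ nu : P → σ → ℤ, ∀ J ∈ F,
          (∀ c, v c = ∑ g, nu J g * a g c) ∧
          ∀ g, 0 ≤ nu J g ∧ nu J g ≤ M₀ ∧ (lam J g = 0 → nu J g = 0) := by
  classical
  obtain ⟨S, hS⟩ := exists_confDecomp (couplingMatrix (P := P) a)
  obtain ⟨B, hB1, hB⟩ := exists_entry_bound S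
  refine ⟨B, hB1, fun K hK => ⟨S.card * (K * B), by positivity, ?_⟩⟩
  rintro d F lam hlam hd ⟨c₀, hc₀⟩
  -- outside `F` nothing is known: there the coefficients are zero and the error is all of `d`
  let lam' : P → σ → ℝ := fun J g => if J ∈ F then lam J g else 0
  let y : ρ ⊕ (P × σ) ⊕ (P × ρ) → ℝ := Sum.elim d (Sum.elim (fun p => lam' p.1 p.2)
    (fun p => d p.2 - ∑ g, lam' p.1 g * a g p.2))
  obtain ⟨mu, hmu⟩ := hS y (by
    rintro ⟨J, c⟩
    rw [couplingMatrix_row]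
    simp [y])
  obtain ⟨G, hGS, hGc, hGK⟩ := hmu.exists_large hB hK (c := .inl c₀) hc₀
  obtain ⟨hGker, hGconf⟩ := hmu.2.1 G (hK.trans_lt hGK).ne'
  have herr : ∀ J ∈ F, ∀ c, G (.inr (.inr (J, c))) = 0 := by
    intro J hJ c
    by_contra hne
    have h1 := hmu.term_le hGS (.inr (.inr (J, c)))
    have h2 : |y (.inr (.inr (J, c)))| ≤ K := by
      simpa [y, lam', hJ] using hd J hJ c
    have h3 : (1 : ℝ) ≤ |(G (.inr (.inr (J, c))) : ℝ)| := by
      exact_mod_cast Int.one_le_abs hne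
    nlinarith
  refine ⟨fun c => G (.inl c), fun h => hGc (congrFun h c₀),
    fun J g => G (.inr (.inl (J, g))), fun J hJ => ⟨fun c => ?_, fun g => ?_⟩⟩
  · have h := hGker (J, c)
    have h' := couplingMatrix_row a G J c
    simp only [Int.cast_id] at h'
    rw [h', herr J hJ c] at h
    linarith
  · have h1 := hGconf (.inr (.inl (J, g)))
    have h2 := hB G hGS (.inr (.inl (J, g)))
    have hy : y (.inr (.inl (J, g))) = lam J g := by simp [y, lam', hJ]
    rw [hy] at h1
    refine ⟨?_, ?_, h1.2⟩
    · rcases (hlam J hJ g).eq_or_lt with h | h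
      · exact (h1.2 h.symm).ge
      · exact_mod_cast nonneg_of_mul_nonneg_left h1.1 h
    · exact_mod_cast (le_abs_self _).trans h2

/-! ### Kernel vectors of 2-stage stochastic matrices -/

/-- The block `(A_i B_i)` of a 2-stage stochastic matrix: global columns and the columns of block `i`. -/
def blockMatrix {n r s t : ℕ} (E : Matrix (Fin n × Fin t) (Fin r ⊕ Fin n × Fin s) ℤ)
    (i : Fin n) : Fin t → Fin r ⊕ Fin s → ℤ := fun k =>
  Sum.elim (fun c => E (i, k) (.inl c)) (fun l => E (i, k) (.inr (i, l)))

/-- The restriction of a vector to the global coordinates and those of block `i`. -/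
def blockVec {n r s : ℕ} {A : Type*} (y : Fin r ⊕ Fin n × Fin s → A) (i : Fin n) :
    Fin r ⊕ Fin s → A :=
  Sum.elim (fun c => y (.inl c)) (fun l => y (.inr (i, l)))

theorem sum_row_eq_block {n r s t : ℕ} {A : Type*} [CommRing A]
    (E : Matrix (Fin n × Fin t) (Fin r ⊕ Fin n × Fin s) ℤ)
    (hE : ∀ (i : Fin n) (k : Fin t) (j : Fin n) (l : Fin s),
      j ≠ i → E (i, k) (Sum.inr (j, l)) = 0)
    (y : Fin r ⊕ Fin n × Fin s → A) (i : Fin n) (k : Fin t) :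
    ∑ x, (E (i, k) x : A) * y x = ∑ c, (blockMatrix E i k c : A) * blockVec y i c := by
  rw [Fintype.sum_sum_type, Fintype.sum_sum_type, Fintype.sum_prod_type,
    Finset.sum_eq_single i]
  · simp [blockMatrix, blockVec]
  · intro j _ hj
    simp [hE i k j _ hj]
  · simp

/-- A real kernel vector of a 2-stage stochastic matrix that has an entry larger than a constant
depending only on `r`, `s`, `t`, `Δ` dominates conformally a nonzero integral kernel vector. -/
theorem exists_conformal_integral_ker (r s t Δ : ℕ) :
    ∃ H : ℕ, ∀ (n : ℕ) (E : Matrix (Fin n × Fin t) (Fin r ⊕ Fin n × Fin s) ℤ),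
      (∀ (i : Fin n) (k : Fin t) (j : Fin n) (l : Fin s),
        j ≠ i → E (i, k) (Sum.inr (j, l)) = 0) →
      (∀ k c, (E k c).natAbs ≤ Δ) →
      ∀ d : Fin r ⊕ Fin n × Fin s → ℝ, RealKer E d → (∃ c, (H : ℝ) < |d c|) →
        ∃ g : Fin r ⊕ Fin n × Fin s → ℤ, g ≠ 0 ∧ IntKer E g ∧
          ConformalTo (fun c => (g c : ℝ)) d := by
  classical
  obtain ⟨S, hS⟩ := exists_uniform_generators (Fin t) (Fin r ⊕ Fin s) Δ
  obtain ⟨B, hB1, hB⟩ := exists_entry_bound S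
  obtain ⟨M₀, hM1, hM⟩ := exists_common_sum (P := Finset ↥S) (σ := ↥S) (ρ := Fin r)
    (fun g c => g.1 (.inl c))
  obtain ⟨H₀, hH0, hH⟩ := hM (S.card * (M₀ * B)) (by positivity)
  refine ⟨⌈max (max 1 H₀) (S.card * (max 1 H₀ * B))⌉₊, ?_⟩
  rintro n E hE hΔ d hd ⟨c₀, hc₀⟩
  have hc₁ := (Nat.le_ceil _).trans_lt hc₀
  rw [max_lt_iff, max_lt_iff] at hc₁
  obtain ⟨⟨hc1, hcH⟩, hcS⟩ := hc₁
  rcases Nat.eq_zero_or_pos n with rfl | hn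
  · -- without blocks there are no equations, so a signed unit vector works
    refine ⟨Pi.single c₀ (if 0 ≤ d c₀ then 1 else -1), ?_, fun k => k.1.elim0, fun c => ?_⟩
    · intro h
      have := congrFun h c₀
      rw [Pi.single_eq_same] at this
      split_ifs at this <;> simp at this
    · by_cases hc : c = c₀
      · subst hc
        simp only [Pi.single_eq_same]
        split_ifs with h
        · simpa using ⟨hc1.le, h⟩
        · push Not at h
          simpa using ⟨hc1.le, h.le⟩
      · simp [hc]
  have : Nonempty (Fin n) := ⟨⟨0, hn⟩⟩
  have hdec : ∀ i, ∃ lam, ConfDecomp (blockMatrix E i) S (blockVec d i) lam := by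
    intro i
    refine hS _ ?_ _ ?_
    · rintro k (c | c) <;> exact hΔ _ _
    · intro k
      rw [← sum_row_eq_block E hE d i k]
      exact hd (i, k)
  choose lam hlam using hdec
  by_cases hglob : ∃ c : Fin r, H₀ < |d (.inl c)|
  · -- `J i` is the set of generators whose coefficient in block `i` is at least `M₀`. It takes
    -- boundedly many values, and dropping the other generators changes the global part only by
    -- a bounded amount, so `exists_common_sum` provides one global part `v` for all blocks.
    let J : Fin n → Finset ↥S := fun i => Finset.univ.filter fun g => (M₀ : ℝ) ≤ lam i g.1
    let rep : Finset ↥S → Fin n := Function.invFun J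
    have hrep : ∀ i, J (rep (J i)) = J i := fun i => Function.invFun_eq ⟨i, rfl⟩
    obtain ⟨v, hv0, nu, hnu⟩ := hH (fun c => d (.inl c)) (Set.range J)
      (fun Q g => if g ∈ Q then lam (rep Q) g.1 else 0)
      (by
        rintro _ ⟨i, rfl⟩ g
        split_ifs
        exacts [(hlam _).1 _, le_rfl])
      (by
        rintro _ ⟨i, rfl⟩ c
        set j := rep (J i) with hj
        have hJj : J j = J i := hrep i
        have h1 : d (.inl c) = ∑ g : ↥S, lam j g.1 * (g.1 (.inl c) : ℝ) := by
          rw [Finset.sum_coe_sort S fun g => lam j g * (g (.inl c) : ℝ)]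
          exact (hlam j).2.2 (.inl c)
        rw [h1, ← Finset.sum_sub_distrib]
        refine (Finset.abs_sum_le_sum_abs _ _).trans ?_
        have h2 := Finset.sum_le_card_nsmul (Finset.univ : Finset ↥S)
          (fun g => |lam j g.1 * (g.1 (.inl c) : ℝ) -
            (if g ∈ J i then lam j g.1 else 0) * (g.1 (.inl c) : ℝ)|) ((M₀ : ℝ) * B) ?_
        · rwa [nsmul_eq_mul, Finset.card_univ, Fintype.card_coe] at h2
        intro g _
        rw [← hJj, ← sub_mul, abs_mul]
        refine mul_le_mul ?_ (hB _ g.2 _) (abs_nonneg _) (by positivity)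
        by_cases hg : g ∈ J j
        · simp [hg]
        · rw [if_neg hg, sub_zero, abs_of_nonneg ((hlam j).1 _)]
          simp only [J, Finset.mem_filter, Finset.mem_univ, true_and, not_le] at hg
          exact hg.le)
      hglob
    let w : Fin n → Fin r ⊕ Fin s → ℤ := fun i c => ∑ g : ↥S, nu (J i) g * g.1 c
    let G : Fin r ⊕ Fin n × Fin s → ℤ := Sum.elim v (fun p => w p.1 (.inr p.2))
    have hGw : ∀ i, blockVec G i = w i := by
      intro i
      funext c
      rcases c with c | l
      · exact (hnu (J i) ⟨i, rfl⟩).1 c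
      · rfl
    have hnu_ne : ∀ i g, nu (J i) g ≠ 0 → (M₀ : ℝ) ≤ lam i g.1 := by
      intro i g hne
      by_contra hlt
      have hg : g ∉ J i := by simpa [J] using hlt
      exact hne (((hnu (J i) ⟨i, rfl⟩).2 g).2.2 (if_neg hg))
    have hwconf : ∀ i, ConformalTo (fun c => (w i c : ℝ)) (blockVec d i) := by
      intro i c
      let nuR : (Fin r ⊕ Fin s → ℤ) → ℝ := fun g => if h : g ∈ S then (nu (J i) ⟨g, h⟩ : ℝ) else 0
      have hsum : (w i c : ℝ) = ∑ g ∈ S, nuR g * (g c : ℝ) := by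
        rw [← Finset.sum_coe_sort S fun g => nuR g * (g c : ℝ)]
        simp [w, nuR]
      dsimp only
      rw [hsum]
      refine (hlam i).sub_conformal nuR (fun g hg => ?_) (fun g hg => ?_) c
      · simp only [nuR, hg, dif_pos]
        exact_mod_cast ((hnu (J i) ⟨i, rfl⟩).2 ⟨g, hg⟩).1
      · simp only [nuR, hg, dif_pos]
        by_cases hz : nu (J i) ⟨g, hg⟩ = 0
        · rw [hz, Int.cast_zero]; exact (hlam i).1 g
        · refine le_trans ?_ (hnu_ne i _ hz)
          exact_mod_cast ((hnu (J i) ⟨i, rfl⟩).2 ⟨g, hg⟩).2.1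
    refine ⟨G, ?_, ?_, ?_⟩
    · intro h
      exact hv0 (funext fun c => congrFun h (.inl c))
    · rintro ⟨i, k⟩
      have h1 := sum_row_eq_block E hE G i k
      simp only [Int.cast_id] at h1
      rw [h1, hGw i]
      simp only [w, Finset.mul_sum]
      rw [Finset.sum_comm]
      refine Finset.sum_eq_zero fun g _ => ?_
      by_cases hz : nu (J i) g = 0
      · simp [hz]
      · have hpos : lam i g.1 ≠ 0 := by
          have h2 := hnu_ne i g hz
          have h3 : (1 : ℝ) ≤ M₀ := by exact_mod_cast hM1
          linarith
        have h4 := ((hlam i).2.1 g.1 hpos).1 k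
        calc ∑ c, blockMatrix E i k c * (nu (J i) g * g.1 c)
            = nu (J i) g * ∑ c, blockMatrix E i k c * g.1 c := by
              rw [Finset.mul_sum]; exact Finset.sum_congr rfl fun c _ => by ring
          _ = 0 := by rw [h4, mul_zero]
    · rintro (c | ⟨i, l⟩)
      · -- any block shows that `v` is conformal to the global part of `d`
        have h1 := hwconf (Classical.arbitrary (Fin n)) (.inl c)
        rw [← hGw] at h1
        exact h1
      · exact hwconf i (.inr l)
  · -- All global entries are at most `H₀`, so a generator with coefficient above `H₀` vanishes on
    -- the global coordinates and can be used in its block alone.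
    push Not at hglob
    rcases c₀ with c₀ | ⟨i, l⟩
    · exact absurd hcH (not_lt.mpr (hglob c₀))
    obtain ⟨g, hgS, hgl, hgT⟩ := (hlam i).exists_large hB (T := max 1 H₀)
      (by positivity) (c := .inr l) hcS
    have hg1 : 1 < lam i g := (le_max_left _ _).trans_lt hgT
    have hgH : H₀ < lam i g := (le_max_right _ _).trans_lt hgT
    have hg0 : ∀ c, g (.inl c) = 0 := by
      intro c
      by_contra hne
      have h1 := (hlam i).term_le hgS (.inl c)
      have h2 : (1 : ℝ) ≤ |(g (.inl c) : ℝ)| := by exact_mod_cast Int.one_le_abs hne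
      have h3 : |blockVec d i (.inl c)| ≤ H₀ := hglob c
      nlinarith
    obtain ⟨hgker, hgconf⟩ := (hlam i).2.1 g (by linarith)
    let G : Fin r ⊕ Fin n × Fin s → ℤ :=
      Sum.elim (fun _ => 0) (fun p => if p.1 = i then g (.inr p.2) else 0)
    have hGi : blockVec G i = g := by
      funext c
      rcases c with c | c
      · exact (hg0 c).symm
      · simp [blockVec, G]
    have hGj : ∀ j, j ≠ i → blockVec G j = 0 := by
      intro j hj
      funext c
      rcases c with c | c
      · rfl
      · simp [blockVec, G, hj]
    refine ⟨G, ?_, ?_, ?_⟩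
    · intro h
      apply hgl
      have := congrFun h (.inr (i, l))
      simpa [G] using this
    · rintro ⟨j, k⟩
      have h1 := sum_row_eq_block E hE G j k
      simp only [Int.cast_id] at h1
      rw [h1]
      by_cases hj : j = i
      · subst hj
        rw [hGi]; exact hgker k
      · rw [hGj j hj]; simp
    · rintro (c | ⟨j, l'⟩)
      · simp [G]
      · by_cases hj : j = i
        · subst hj
          have h1 := (hlam j).term_le hgS (.inr l')
          have h2 := abs_nonneg (g (.inr l') : ℝ)
          refine ⟨?_, ?_⟩
          · simp only [G, Sum.elim_inr, if_true]
            refine le_trans ?_ h1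
            nlinarith
          · simp only [G, Sum.elim_inr, if_true]
            exact (hgconf (.inr l')).1
        · simp [G, hj]

/-! ### Exchange argument -/

/-- Moving two points towards each other by the same amount `g`, possibly past each other but within the
segment between them, does not increase the sum of the values of a convex function. -/
theorem ConvexOn.exchange {φ : ℝ → ℝ} (hφ : ConvexOn ℝ Set.univ φ) {a b g : ℝ}
    (h1 : |g| ≤ |b - a|) (h2 : 0 ≤ g * (b - a)) :
    φ (a + g) + φ (b - g) ≤ φ a + φ b := by
  by_cases hab : b - a = 0
  · have : g = 0 := by simpa [hab] using h1
    simp [this]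
  · have hpos : 0 < (b - a) * (b - a) := mul_self_pos.mpr hab
    set τ := g / (b - a) with hτ
    have hg : g = τ * (b - a) := by rw [hτ]; field_simp
    have hτ0 : 0 ≤ τ := by
      have : τ = g * (b - a) / ((b - a) * (b - a)) := by rw [hτ]; field_simp
      rw [this]; exact div_nonneg h2 hpos.le
    have hτ1 : τ ≤ 1 := by
      rw [hg, abs_mul, abs_of_nonneg hτ0] at h1
      exact (mul_le_iff_le_one_left (abs_pos.mpr hab)).mp h1
    have e1 := hφ.2 (Set.mem_univ a) (Set.mem_univ b) (sub_nonneg.mpr hτ1) hτ0 (by ring)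
    have e2 := hφ.2 (Set.mem_univ a) (Set.mem_univ b) hτ0 (sub_nonneg.mpr hτ1) (by ring)
    simp only [smul_eq_mul] at e1 e2
    have r1 : (1 - τ) * a + τ * b = a + g := by rw [hg]; ring
    have r2 : τ * a + (1 - τ) * b = b - g := by rw [hg]; ring
    rw [r1] at e1; rw [r2] at e2
    linarith

theorem between_of_conformal {a b g : ℝ} (h1 : |g| ≤ |b - a|) (h2 : 0 ≤ g * (b - a)) :
    min a b ≤ a + g ∧ a + g ≤ max a b ∧ min a b ≤ b - g ∧ b - g ≤ max a b ∧
      |b - g - a| = |b - a| - |g| := by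
  rcases lt_trichotomy (b - a) 0 with h | h | h
  · have hg : g ≤ 0 := by by_contra hc; push Not at hc; nlinarith
    rw [abs_of_neg h, abs_of_nonpos hg] at *
    have hba : b ≤ a := by linarith
    rw [min_eq_right hba, max_eq_left hba, abs_of_nonpos (by linarith)]
    refine ⟨?_, ?_, ?_, ?_, ?_⟩ <;> linarith
  · have hg : g = 0 := by simpa [h] using h1
    subst hg
    simp
  · have hg : 0 ≤ g := by by_contra hc; push Not at hc; nlinarith
    rw [abs_of_pos h, abs_of_nonneg hg] at *
    have hba : a ≤ b := by linarith
    rw [min_eq_left hba, max_eq_right hba, abs_of_nonneg (by linarith)]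
    refine ⟨?_, ?_, ?_, ?_, ?_⟩ <;> linarith

theorem natAbs_le_matNormInf {R C : Type*} [Fintype R] [Fintype C] (E : Matrix R C ℤ) (k : R)
    (c : C) : (E k c).natAbs ≤ matNormInf E :=
  Finset.le_sup (f := fun p : R × C => (E p.1 p.2).natAbs) (Finset.mem_univ (k, c))

/-- Among all mixed optima there is one closest to `z` in the `ℓ₁`-norm, by compactness of the feasible
set and continuity of convex functions on `ℝ`. -/
theorem exists_closest_optimum {R C : Type*} [Fintype C] (E : Matrix R C ℤ) (I : Finset C)
    (b : R → ℝ) (l u : C → ℝ) (f : C → ℝ → ℝ) (hf : ∀ c, ConvexOn ℝ Set.univ (f c))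
    (z : C → ℝ) (F : Set (C → ℝ))
    (hF : F = {y | (E.map (Int.cast : ℤ → ℝ)).mulVec y = b ∧
            l ≤ y ∧ y ≤ u ∧ ∀ c ∈ I, ∃ w : ℤ, y c = w}) (hz : z ∈ F) :
    ∃ x ∈ F, (∀ y ∈ F, ∑ c, f c (x c) ≤ ∑ c, f c (y c)) ∧
      ∀ x' ∈ F, ∑ c, f c (x' c) ≤ ∑ c, f c (x c) →
        ∑ c, |x c - z c| ≤ ∑ c, |x' c - z c| := by
  have hcont : Continuous fun y : C → ℝ => ∑ c, f c (y c) := by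
    refine continuous_finsetSum _ fun c _ => ?_
    have : Continuous (f c) :=
      continuousOn_univ.mp ((hf c).continuousOn isOpen_univ)
    fun_prop
  have hcompact : IsCompact F := by
    refine (isCompact_Icc (a := l) (b := u)).of_isClosed_subset ?_ ?_
    · have hIntegral : IsClosed {y : C → ℝ | ∀ c ∈ I, ∃ w : ℤ, y c = w} := by
        have : {y : C → ℝ | ∀ c ∈ I, ∃ w : ℤ, y c = w} =
            ⋂ c ∈ I, (fun y : C → ℝ => y c) ⁻¹' Set.range (Int.cast : ℤ → ℝ) := by
          ext y; simp [eq_comm]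
        rw [this]
        exact isClosed_biInter fun c _ =>
          Int.isClosedEmbedding_coe_real.isClosed_range.preimage (continuous_apply c)
      have hEc : IsClosed {y : C → ℝ | (E.map (Int.cast : ℤ → ℝ)).mulVec y = b} :=
        isClosed_eq (Continuous.matrix_mulVec continuous_const continuous_id) continuous_const
      have : F = {y | (E.map (Int.cast : ℤ → ℝ)).mulVec y = b} ∩ ({y | l ≤ y} ∩ ({y | y ≤ u} ∩
          {y | ∀ c ∈ I, ∃ w : ℤ, y c = w})) := hF
      rw [this]
      exact hEc.inter (isClosed_Ici.inter (isClosed_Iic.inter hIntegral))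
    · rw [hF]; exact fun y hy => ⟨hy.2.1, hy.2.2.1⟩
  obtain ⟨x₀, hx₀, hmin⟩ := hcompact.exists_isMinOn ⟨z, hz⟩ hcont.continuousOn
  have hopt : IsCompact (F ∩ {y | ∑ c, f c (y c) ≤ ∑ c, f c (x₀ c)}) :=
    hcompact.inter_right (isClosed_le hcont continuous_const)
  obtain ⟨x, ⟨hxF, hxle⟩, hxmin⟩ := hopt.exists_isMinOn ⟨x₀, hx₀, le_refl (∑ c, f c (x₀ c))⟩
    (f := fun y => ∑ c, |y c - z c|) (Continuous.continuousOn (by fun_prop))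
  refine ⟨x, hxF, fun y hy => le_trans hxle (hmin hy), fun x' hx' hle => ?_⟩
  exact hxmin ⟨hx', le_trans hle hxle⟩

/-- proximity for 2-stage stochastic MIPs: for any integral optimum `z`
there is a mixed optimum `x` with `‖z − x‖∞` bounded by a function of the block
dimensions and `‖E‖∞` alone. -/
theorem twoStage_mip_proximity :
    ∃ h' : ℕ → ℕ → ℕ → ℕ → ℕ,
      ∀ (n r s t : ℕ) (E : Matrix (Fin n × Fin t) (Fin r ⊕ Fin n × Fin s) ℤ),
        (∀ (i : Fin n) (k : Fin t) (j : Fin n) (l : Fin s),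
          j ≠ i → E (i, k) (Sum.inr (j, l)) = 0) →
        ∀ (I : Finset (Fin r ⊕ Fin n × Fin s)) (b : Fin n × Fin t → ℝ)
          (l u : (Fin r ⊕ Fin n × Fin s) → ℝ), l ≤ u →
        ∀ f : (Fin r ⊕ Fin n × Fin s) → ℝ → ℝ, (∀ c, ConvexOn ℝ Set.univ (f c)) →
        ∀ Feas : ((Fin r ⊕ Fin n × Fin s) → ℝ) → Prop,
          (Feas = fun y => (E.map (Int.cast : ℤ → ℝ)).mulVec y = b ∧
            l ≤ y ∧ y ≤ u ∧ ∀ c ∈ I, ∃ w : ℤ, y c = w) →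
        ∀ z : (Fin r ⊕ Fin n × Fin s) → ℤ,
          (Feas fun c => (z c : ℝ)) →
          (∀ y : (Fin r ⊕ Fin n × Fin s) → ℤ, (Feas fun c => (y c : ℝ)) →
            ∑ c, f c (z c) ≤ ∑ c, f c (y c)) →
          ∃ x : (Fin r ⊕ Fin n × Fin s) → ℝ, Feas x ∧
            (∀ y, Feas y → ∑ c, f c (x c) ≤ ∑ c, f c (y c)) ∧
            ∀ c, |(z c : ℝ) - x c| ≤ (h' r s t (matNormInf E) : ℝ) := by
  choose H hH using exists_conformal_integral_ker
  refine ⟨H, ?_⟩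
  intro n r s t E hE I b l u _ f hf Feas hFeas z hz hzopt
  obtain ⟨x, hxF, hxopt, hxclose⟩ := exists_closest_optimum E I b l u f hf (fun c => (z c : ℝ))
    {y | Feas y} (by rw [hFeas]) hz
  refine ⟨x, hxF, hxopt, ?_⟩
  by_contra hcon
  push Not at hcon
  obtain ⟨c₀, hc₀⟩ := hcon
  have hzF : Feas fun c => (z c : ℝ) := hz
  have hxF' : Feas x := hxF
  rw [hFeas] at hzF hxF'
  obtain ⟨hzE, hzl, hzu, -⟩ := hzF
  obtain ⟨hxE, hxl, hxu, hxI⟩ := hxF'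
  have hker : RealKer E fun c => x c - z c := by
    intro k
    have h1 := congrFun hxE k
    have h2 := congrFun hzE k
    simp only [Matrix.mulVec, dotProduct, Matrix.map_apply] at h1 h2
    simp_rw [mul_sub, Finset.sum_sub_distrib]
    rw [h1, h2, sub_self]
  obtain ⟨g, hg0, hgker, hgconf⟩ := hH r s t (matNormInf E) n E hE (natAbs_le_matNormInf E) _ hker
    ⟨c₀, by rw [abs_sub_comm]; exact hc₀⟩
  have hgE : (E.map (Int.cast : ℤ → ℝ)).mulVec (fun c => (g c : ℝ)) = 0 := by
    funext k
    simp only [Matrix.mulVec, dotProduct, Matrix.map_apply, Pi.zero_apply]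
    exact_mod_cast hgker k
  have hbet := fun c => between_of_conformal (hgconf c).1 (hgconf c).2
  -- Since `z + g` and `x - g` are feasible and `z` is optimal among integral points, `x - g` is
  -- a mixed optimum strictly closer to `z`.
  have hzg : Feas fun c => ((z c + g c : ℤ) : ℝ) := by
    rw [hFeas]
    refine ⟨?_, fun c => ?_, fun c => ?_, fun c _ => ⟨_, rfl⟩⟩
    · have : (fun c => ((z c + g c : ℤ) : ℝ)) = (fun c => (z c : ℝ)) + fun c => (g c : ℝ) := by
        funext c; push_cast; rfl
      rw [this, Matrix.mulVec_add, hzE, hgE, add_zero]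
    · push_cast
      exact (le_min (hzl c) (hxl c)).trans (hbet c).1
    · push_cast
      exact (hbet c).2.1.trans (max_le (hzu c) (hxu c))
  have hxg : Feas fun c => x c - g c := by
    rw [hFeas]
    refine ⟨?_, fun c => ?_, fun c => ?_, fun c hc => ?_⟩
    · have : (fun c => x c - (g c : ℝ)) = x - fun c => (g c : ℝ) := rfl
      rw [this, Matrix.mulVec_sub, hxE, hgE, sub_zero]
    · exact (le_min (hzl c) (hxl c)).trans (hbet c).2.2.1
    · exact (hbet c).2.2.2.1.trans (max_le (hzu c) (hxu c))
    · obtain ⟨w, hw⟩ := hxI c hc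
      exact ⟨w - g c, by dsimp only; rw [hw]; push_cast; rfl⟩
  have hsum : ∑ c, f c (z c + g c) + ∑ c, f c (x c - g c) ≤ ∑ c, f c (z c) + ∑ c, f c (x c) := by
    rw [← Finset.sum_add_distrib, ← Finset.sum_add_distrib]
    exact Finset.sum_le_sum fun c _ => (hf c).exchange (hgconf c).1 (hgconf c).2
  have hz' := hzopt (fun c => z c + g c) hzg
  push_cast at hz'
  have hclose := hxclose _ hxg (by linarith)
  simp_rw [fun c => (hbet c).2.2.2.2, Finset.sum_sub_distrib] at hclose
  obtain ⟨c₁, hc₁⟩ := Function.ne_iff.mp hg0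
  have hgpos : 0 < ∑ c, |(g c : ℝ)| :=
    Finset.sum_pos' (fun c _ => abs_nonneg _)
      ⟨c₁, Finset.mem_univ _, abs_pos.mpr (by exact_mod_cast hc₁)⟩
  linarith
end

section
/- Let E be a 2-stage stochastic matrix with n blocks and block dimensions r, s, t, and let D be a set of columns of E with |D| = nt such that the square submatrix of E formed by the columns in D is invertible. For each block i ∈ [n], let D_i be the set of local columns of block i contained in D. Then the number of blocks i ∈ [n] with D_i ≠ ∅ and |D_i| < t is at most r. -/
/-!
A nonzero determinant has a nonzero term in its Leibniz expansion, i.e. a bijection between the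
rows and the chosen columns that matches each row with a column having a nonzero entry in it.
By the block structure, a local column matched with a row of block `i` is a local column of
block `i`. If `|D_i| < t`, the `t` rows of block `i` cannot all be matched with local columns, so
one of them is matched with a global column. Distinct blocks use distinct global columns, and there
are only `r` of those.
-/

open Matrix

/-- if `D` is a set of `n·t` columns of a 2-stage stochastic matrix whose
square submatrix is invertible, then at most `r` blocks are portrait, i.e., at most `r`
blocks `i` satisfy `D_i ≠ ∅` and `|D_i| < t`. -/
theorem twoStage_portrait_blocks_bound (n r s t : ℕ)
    (E : Matrix (Fin n × Fin t) (Fin r ⊕ Fin n × Fin s) ℤ)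
    (hE : ∀ (i : Fin n) (k : Fin t) (j : Fin n) (l : Fin s),
      j ≠ i → E (i, k) (Sum.inr (j, l)) = 0)
    (D : Finset (Fin r ⊕ Fin n × Fin s)) (hcard : D.card = n * t)
    (hinv : ∃ e : (Fin n × Fin t) ≃ {c // c ∈ D},
      ((E.map (Int.cast : ℤ → ℝ)).submatrix id fun p => ((e p : {c // c ∈ D}) : Fin r ⊕ Fin n × Fin s)).det ≠ 0) :
    (Finset.univ.filter fun i : Fin n =>
      (Finset.univ.filter fun l : Fin s => Sum.inr (i, l) ∈ D).Nonempty ∧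
      (Finset.univ.filter fun l : Fin s => Sum.inr (i, l) ∈ D).card < t).card ≤ r := by
  obtain ⟨e, hdet⟩ := hinv
  -- A permutation whose term in the Leibniz expansion does not vanish.
  obtain ⟨σ, hσ⟩ : ∃ σ : Equiv.Perm (Fin n × Fin t), ∀ p, E (σ p) (e p) ≠ 0 := by
    rw [Matrix.det_apply] at hdet
    obtain ⟨σ, -, hσ⟩ := Finset.exists_ne_zero_of_sum_ne_zero hdet
    refine ⟨σ, fun p hp => hσ ?_⟩
    rw [Finset.prod_eq_zero (Finset.mem_univ p) (by simp [hp]), smul_zero]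
  -- `col q` is the column of `D` matched with the row `q`.
  let col : Fin n × Fin t → Fin r ⊕ Fin n × Fin s := fun q => e (σ.symm q)
  have hcol : ∀ q, E q (col q) ≠ 0 := fun q => by simpa using hσ (σ.symm q)
  have hmem : ∀ q, col q ∈ D := fun q => (e (σ.symm q)).2
  have hinj : Function.Injective col := fun q q' h =>
    σ.symm.injective (e.injective (Subtype.ext h))
  have key : ∀ i : Fin n, (Finset.univ.filter fun l : Fin s => Sum.inr (i, l) ∈ D).card < t →
      ∃ g : Fin r, ∃ k : Fin t, col (i, k) = Sum.inl g := by
    intro i hi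
    by_contra! hno
    have hloc : ∀ k : Fin t, ∃ l : Fin s, col (i, k) = Sum.inr (i, l) := by
      intro k
      rcases hc : col (i, k) with g | ⟨j, l⟩
      · exact absurd hc (hno g k)
      · have hji : j = i := by
          by_contra hne
          exact hcol (i, k) (hc ▸ hE i k j l hne)
        exact ⟨l, by rw [hji]⟩
    choose f hf using hloc
    have hle := Finset.card_le_card_of_injOn (s := (Finset.univ : Finset (Fin t)))
      (t := Finset.univ.filter fun l : Fin s => Sum.inr (i, l) ∈ D) f
      (fun k _ => by simpa [← hf k] using hmem (i, k))
      (fun k _ k' _ h => by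
        have := hinj ((hf k).trans (h ▸ (hf k').symm))
        exact (Prod.mk.inj this).2)
    rw [Finset.card_univ, Fintype.card_fin] at hle
    omega
  choose g hg using key
  rw [← Fintype.card_coe]
  refine (Fintype.card_le_of_injective
    (fun i => g i.1 (Finset.mem_filter.1 i.2).2.2) ?_).trans_eq (Fintype.card_fin r)
  intro i j hij
  obtain ⟨k, hk⟩ := hg i.1 (Finset.mem_filter.1 i.2).2.2
  obtain ⟨k', hk'⟩ := hg j.1 (Finset.mem_filter.1 j.2).2.2
  have := hinj (hk.trans ((congrArg Sum.inl hij).trans hk'.symm))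
  exact Subtype.ext (Prod.mk.inj this).1
end

section
/- For every integer n ≥ 2 there exist finite sets S and T of positive integers with |S| = |T| = n such that (1) Σ_{s∈S} s = Σ_{t∈T} t = 2^{n²} − 1, and (2) for every pair of subsets S' ⊆ S and T' ⊆ T with 0 < |S' ∪ T'| < 2n, it holds that Σ_{s∈S'} s ≠ Σ_{t∈T'} t. -/
/-!
Arrange the bit positions `0, …, n² - 1` in an `n × n` grid, the position `k` lying in row `k / n`
and column `k % n`. Let `S` consist of the `n` numbers whose binary digits fill exactly one row,
and `T` of the `n` numbers whose digits fill exactly one column. Each family partitions the grid,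
so both sets sum to `2 ^ n² - 1`, and sums of subsets involve no carries: they are the numbers
whose digits fill a set `R` of rows, respectively a set `C` of columns. By uniqueness of binary
expansions two such sums agree only if `R × [n] = [n] × C`, which forces `R` and `C` to be both
empty or both full (`rows_eq_cols`). The full case has `|S ∪ T| = 2n`, because for `n ≥ 2` no row
equals a column.
-/

open BigOperators

/-- The number whose binary digits `1` are at the positions `k < n²` with `p k ∈ R`; it is used
with `p k = k / n` (rows of the grid) and `p k = k % n` (columns). -/
def gridSum (n : ℕ) (p : ℕ → ℕ) (R : Finset ℕ) : ℕ :=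
  ∑ k ∈ Finset.range (n ^ 2) with p k ∈ R, 2 ^ k

lemma sum_gridSum_singleton (n : ℕ) (p : ℕ → ℕ) (R : Finset ℕ) :
    ∑ i ∈ R, gridSum n p {i} = gridSum n p R := by
  simp only [gridSum, Finset.sum_filter, Finset.mem_singleton]
  rw [Finset.sum_comm]
  simp

lemma gridSum_range (n : ℕ) (p : ℕ → ℕ) (hp : ∀ k < n ^ 2, p k < n) :
    gridSum n p (Finset.range n) = 2 ^ (n ^ 2) - 1 := by
  have : (Finset.range (n ^ 2)).filter (fun k => p k ∈ Finset.range n) = Finset.range (n ^ 2) :=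
    Finset.filter_true_of_mem fun k hk =>
      Finset.mem_range.2 (hp k (Finset.mem_range.1 hk))
  rw [gridSum, this, Nat.geomSum_eq le_rfl]
  simp

/-- Uniqueness of binary expansions, read on the grid. -/
lemma mem_iff_of_gridSum_eq {n : ℕ} {p q : ℕ → ℕ} {R C : Finset ℕ}
    (h : gridSum n p R = gridSum n q C) {k : ℕ} (hk : k < n ^ 2) : p k ∈ R ↔ q k ∈ C := by
  have := Finset.geomSum_injective le_rfl h
  have := Finset.ext_iff.1 this k
  simpa [hk] using this

lemma grid_pos_lt {n i j : ℕ} (hi : i < n) (hj : j < n) : i * n + j < n ^ 2 := by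
  nlinarith

lemma grid_div {n i j : ℕ} (hj : j < n) : (i * n + j) / n = i := by
  rw [mul_comm, Nat.mul_add_div (by omega), Nat.div_eq_of_lt hj, add_zero]

lemma grid_mod {n i j : ℕ} (hj : j < n) : (i * n + j) % n = j := by
  rw [mul_comm, Nat.mul_add_mod, Nat.mod_eq_of_lt hj]

/-- A union of rows of the grid that is also a union of columns is empty or everything. -/
lemma rows_eq_cols {n : ℕ} (hn : 2 ≤ n) {R C : Finset ℕ} (hR : R ⊆ Finset.range n)
    (hC : C ⊆ Finset.range n) (h : gridSum n (· / n) R = gridSum n (· % n) C) :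
    (R = ∅ ∧ C = ∅) ∨ (R = Finset.range n ∧ C = Finset.range n) := by
  have key : ∀ i < n, ∀ j < n, (i ∈ R ↔ j ∈ C) := by
    intro i hi j hj
    have := mem_iff_of_gridSum_eq h (grid_pos_lt hi hj)
    simpa only [grid_div hj, grid_mod hj] using this
  by_cases h0 : 0 ∈ R
  · right
    have hC' : ∀ j < n, j ∈ C := fun j hj => (key 0 (by omega) j hj).1 h0
    have hR' : ∀ i < n, i ∈ R := fun i hi => (key i hi 0 (by omega)).2 (hC' 0 (by omega))
    exact ⟨hR.antisymm fun i hi => hR' i (Finset.mem_range.1 hi),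
      hC.antisymm fun j hj => hC' j (Finset.mem_range.1 hj)⟩
  · left
    have hC' : ∀ j < n, j ∉ C := fun j hj hj' => h0 ((key 0 (by omega) j hj).2 hj')
    have hR' : ∀ i < n, i ∉ R := fun i hi hi' =>
      hC' 0 (by omega) ((key i hi 0 (by omega)).1 hi')
    exact ⟨Finset.eq_empty_of_forall_notMem fun i hi => hR' i (Finset.mem_range.1 (hR hi)) hi,
      Finset.eq_empty_of_forall_notMem fun j hj => hC' j (Finset.mem_range.1 (hC hj)) hj⟩

lemma gridSum_singleton_pos {n : ℕ} {p : ℕ → ℕ} {i : ℕ} (hp : ∃ k < n ^ 2, p k = i) :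
    0 < gridSum n p {i} := by
  obtain ⟨k, hk, hpk⟩ := hp
  exact Finset.sum_pos (fun _ _ => by positivity) ⟨k, by simp [hk, hpk]⟩

lemma gridSum_singleton_injOn {n : ℕ} {p : ℕ → ℕ} (hp : ∀ i < n, ∃ k < n ^ 2, p k = i) :
    Set.InjOn (fun i => gridSum n p {i}) (Finset.range n) := by
  intro i hi j _ h
  obtain ⟨k, hk, hpk⟩ := hp i (by simpa using hi)
  simpa [hpk] using mem_iff_of_gridSum_eq h hk

/-- for every `n ≥ 2` there are sets `S, T` of `n` positive integers each,
both summing to `2^(n²) − 1`, such that no nonempty proper "partial" pair of subsets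
`S' ⊆ S`, `T' ⊆ T` with `0 < |S' ∪ T'| < 2n` has equal sums. -/
theorem distinct_subset_sums_sets (n : ℕ) (hn : 2 ≤ n) :
    ∃ S T : Finset ℕ,
      (∀ s ∈ S, 0 < s) ∧ (∀ t ∈ T, 0 < t) ∧
      S.card = n ∧ T.card = n ∧
      (∑ s ∈ S, s) = 2 ^ (n ^ 2) - 1 ∧ (∑ t ∈ T, t) = 2 ^ (n ^ 2) - 1 ∧
      ∀ S' ⊆ S, ∀ T' ⊆ T, 0 < (S' ∪ T').card → (S' ∪ T').card < 2 * n →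
        (∑ s ∈ S', s) ≠ (∑ t ∈ T', t) := by
  have hrow : ∀ i < n, ∃ k < n ^ 2, k / n = i := fun i hi =>
    ⟨i * n + 0, grid_pos_lt hi (by omega), grid_div (by omega)⟩
  have hcol : ∀ j < n, ∃ k < n ^ 2, k % n = j := fun j hj =>
    ⟨0 * n + j, grid_pos_lt (by omega) hj, grid_mod hj⟩
  have hrow_inj := gridSum_singleton_injOn (p := (· / n)) hrow
  have hcol_inj := gridSum_singleton_injOn (p := (· % n)) hcol
  have sum_image : ∀ (p : ℕ → ℕ) (R : Finset ℕ), R ⊆ Finset.range n →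
      Set.InjOn (fun i => gridSum n p {i}) (Finset.range n) →
      ∑ s ∈ R.image (fun i => gridSum n p {i}), s = gridSum n p R := by
    intro p R hR hinj
    rw [Finset.sum_image (hinj.mono (by exact_mod_cast hR)), sum_gridSum_singleton]
  have hS : ((Finset.range n).image (fun i => gridSum n (· / n) {i})).card = n := by
    rw [Finset.card_image_of_injOn hrow_inj, Finset.card_range]
  have hT : ((Finset.range n).image (fun i => gridSum n (· % n) {i})).card = n := by
    rw [Finset.card_image_of_injOn hcol_inj, Finset.card_range]
  refine ⟨(Finset.range n).image (fun i => gridSum n (· / n) {i}),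
    (Finset.range n).image (fun i => gridSum n (· % n) {i}), ?_, ?_, hS, hT, ?_, ?_, ?_⟩
  · intro s hs
    obtain ⟨i, hi, rfl⟩ := Finset.mem_image.1 hs
    exact gridSum_singleton_pos (hrow i (Finset.mem_range.1 hi))
  · intro s hs
    obtain ⟨i, hi, rfl⟩ := Finset.mem_image.1 hs
    exact gridSum_singleton_pos (hcol i (Finset.mem_range.1 hi))
  · rw [sum_image _ _ subset_rfl hrow_inj]
    exact gridSum_range n _ fun k hk => Nat.div_lt_of_lt_mul (by rwa [← sq])
  · rw [sum_image _ _ subset_rfl hcol_inj]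
    exact gridSum_range n _ fun k _ => Nat.mod_lt _ (by omega)
  · intro S' hS' T' hT' hpos hlt heq
    obtain ⟨R, hR, rfl⟩ := Finset.subset_image_iff.1 hS'
    obtain ⟨C, hC, rfl⟩ := Finset.subset_image_iff.1 hT'
    have hR : R ⊆ Finset.range n := by exact_mod_cast hR
    have hC : C ⊆ Finset.range n := by exact_mod_cast hC
    rw [sum_image _ R hR hrow_inj, sum_image _ C hC hcol_inj] at heq
    rcases rows_eq_cols hn hR hC heq with ⟨rfl, rfl⟩ | ⟨rfl, rfl⟩
    · simp at hpos
    · rw [Finset.card_union_of_disjoint, hS, hT] at hlt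
      · omega
      -- A single row is neither empty nor, as `n ≥ 2`, the whole grid, so it is no column.
      · rw [Finset.disjoint_left]
        intro x hx hx'
        obtain ⟨i, hi, rfl⟩ := Finset.mem_image.1 hx
        obtain ⟨j, hj, hij⟩ := Finset.mem_image.1 hx'
        rcases rows_eq_cols hn (Finset.singleton_subset_iff.2 hi)
          (Finset.singleton_subset_iff.2 hj) hij.symm with ⟨h, _⟩ | ⟨h, _⟩
        · simp at h
        · have := congrArg Finset.card h
          simp at this
          omega
end

section
/- For every even integer n ≥ 2, let E_n be the integer matrix whose columns are indexed by [n]×{1,2,3} and whose rows are indexed by the disjoint union of {1,2,3} and [n], with entries: the entry in global row j ∈ {1,2,3} and column (i,j') equals 1 if j' = j and 0 otherwise, and the entry in local row i ∈ [n] and column (i',j') equals 1 if i' = i and 0 otherwise (so E_n is the n-fold matrix with top blocks the 3×3 identity and diagonal blocks the row vector (1,1,1), and ‖E_n‖∞ = 1). Let the integral coordinates be I = {(i,1) : i ∈ [n]}. Then the mixed Graver basis G_X(E_n) contains an element g with ‖g‖₁ ≥ n; in particular, the maximum ℓ₁-norm of mixed Graver basis elements of E_n grows at least linearly in n even though the block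 dimensions and ‖E_n‖∞ are constant. -/
/-!
Write `n = 2m`. The element is built from bricks with `±1` in the integral coordinate: `m` bricks
`(1, -1/m, -(1 - 1/m))`, one brick `(-1, 1, 0)` and `m - 1` bricks `(-1, 0, 1)`. All brick sums and
all column sums vanish, and every brick has `ℓ₁`-norm `2`.

Let `y` be a mixed kernel vector conformal to this element `g`. In each brick the integral coordinate of `y` is
either `0` or that of `g`; since the two fractional coordinates of `g` have the opposite sign and
sum to `∓1`, the whole brick of `y` is then `0` or the brick of `g` (`brick_selection`). So `y` is
a selection of bricks, with indicator `ε`. The second column says that the number of selected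
positive bricks is `m` times the indicator of the brick `(-1, 1, 0)`, i.e. `0` or `m`; the first
column says that equally many negative bricks are selected. Hence `y = 0` or `y = g`
(`selection_trivial`).
-/

open Matrix BigOperators

/-- The `n`-fold matrix with top blocks `I₃` and diagonal blocks `(1,1,1)`. -/
def nfoldMat (n : ℕ) : Matrix (Fin 3 ⊕ Fin n) (Fin n × Fin 3) ℤ :=
  Matrix.of fun (rw : Fin 3 ⊕ Fin n) (c : Fin n × Fin 3) =>
    Sum.elim (fun j => if c.2 = j then (1 : ℤ) else 0) (fun i => if c.1 = i then (1 : ℤ) else 0) rw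

lemma mixedKer_nfoldMat (n : ℕ) (y : Fin n × Fin 3 → ℝ) :
    MixedKer (nfoldMat n) (Finset.univ.filter fun c : Fin n × Fin 3 => c.2 = 0) y ↔
      (∀ j, ∑ i, y (i, j) = 0) ∧ (∀ i, y (i, 0) + y (i, 1) + y (i, 2) = 0) ∧
        ∀ i, ∃ z : ℤ, y (i, 0) = z := by
  have h1 : ∀ j, ((nfoldMat n).map (Int.cast : ℤ → ℝ)).mulVec y (Sum.inl j)
      = ∑ i, y (i, j) := by
    intro j
    simp [Matrix.mulVec, dotProduct, nfoldMat, Fintype.sum_prod_type]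
  have h2 : ∀ i, ((nfoldMat n).map (Int.cast : ℤ → ℝ)).mulVec y (Sum.inr i)
      = y (i, 0) + y (i, 1) + y (i, 2) := by
    intro i
    simp [Matrix.mulVec, dotProduct, nfoldMat, Fintype.sum_prod_type_right, Fin.sum_univ_three]
  unfold MixedKer
  rw [funext_iff, Sum.forall]
  simp only [h1, h2, Pi.zero_apply, Finset.mem_filter, Finset.mem_univ, true_and, Prod.forall]
  constructor
  · rintro ⟨⟨a, b⟩, c⟩
    exact ⟨a, b, fun i => c i 0 rfl⟩
  · rintro ⟨a, b, c⟩
    refine ⟨⟨a, b⟩, ?_⟩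
    rintro i j rfl
    exact c i

/-- The integral coordinate of brick `i`. -/
noncomputable def brickInt (m : ℕ) (i : Fin (m + m)) : ℝ := if i.val < m then 1 else -1

/-- The second coordinate of brick `i`: `-1/m` on the positive bricks, and `1` on exactly one of
the negative bricks. -/
noncomputable def brickFrac (m : ℕ) (i : Fin (m + m)) : ℝ :=
  if i.val < m then -(1 / m) else if i.val = m then 1 else 0

/-- The Graver element; the third coordinate of each brick makes the brick sum to zero. -/
noncomputable def graverElt (m : ℕ) (c : Fin (m + m) × Fin 3) : ℝ :=
  ![brickInt m c.1, brickFrac m c.1, -brickInt m c.1 - brickFrac m c.1] c.2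

/-- A zero-sum brick with integral first coordinate that is conformal to a zero-sum brick
`(a, b, -a-b)` with `a = ±1` and the last two entries of sign opposite to `a` is either zero or
that whole brick. -/
lemma brick_selection {a b x y w : ℝ} {z : ℤ} (hx : x = z) (hsum : x + y + w = 0)
    (hab : (a = 1 ∧ -1 ≤ b ∧ b ≤ 0) ∨ (a = -1 ∧ 0 ≤ b ∧ b ≤ 1))
    (h0 : |x| ≤ |a| ∧ 0 ≤ x * a) (h1 : |y| ≤ |b| ∧ 0 ≤ y * b)
    (h2 : |w| ≤ |-a - b| ∧ 0 ≤ w * (-a - b)) :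
    ∃ e : ℝ, (e = 0 ∨ e = 1) ∧ x = e * a ∧ y = e * b ∧ w = e * (-a - b) := by
  obtain ⟨h0, h0'⟩ := h0
  obtain ⟨h1, h1'⟩ := h1
  obtain ⟨h2, h2'⟩ := h2
  rcases hab with ⟨rfl, hb, hb'⟩ | ⟨rfl, hb, hb'⟩
  · rw [abs_one] at h0
    rw [abs_of_nonpos hb'] at h1
    rw [abs_of_nonpos (by linarith : -1 - b ≤ 0)] at h2
    rw [abs_le] at h0 h1 h2
    have hy : y ≤ 0 := by
      by_contra! hc
      nlinarith
    have hw : w ≤ 0 := by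
      by_contra! hc
      nlinarith
    have z0 : (0 : ℤ) ≤ z := by exact_mod_cast (by linarith : (0 : ℝ) ≤ z)
    have z1 : z ≤ 1 := by exact_mod_cast (by linarith : (z : ℝ) ≤ 1)
    have hz : z = 0 ∨ z = 1 := by omega
    rcases hz with rfl | rfl
    · exact ⟨0, Or.inl rfl, by push_cast at hx; linarith, by push_cast at hx; linarith,
        by push_cast at hx; linarith⟩
    · exact ⟨1, Or.inr rfl, by push_cast at hx; linarith, by push_cast at hx; linarith,
        by push_cast at hx; linarith⟩
  · rw [abs_neg, abs_one] at h0
    rw [abs_of_nonneg hb] at h1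
    rw [abs_of_nonneg (by linarith : 0 ≤ - -1 - b)] at h2
    rw [abs_le] at h0 h1 h2
    have hy : 0 ≤ y := by
      by_contra! hc
      nlinarith
    have hw : 0 ≤ w := by
      by_contra! hc
      nlinarith
    have z0 : z ≤ 0 := by exact_mod_cast (by linarith : (z : ℝ) ≤ 0)
    have z1 : -1 ≤ z := by exact_mod_cast (by push_cast; linarith : ((-1 : ℤ) : ℝ) ≤ z)
    have hz : z = 0 ∨ z = -1 := by omega
    rcases hz with rfl | rfl
    · exact ⟨0, Or.inl rfl, by push_cast at hx; linarith, by push_cast at hx; linarith,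
        by push_cast at hx; linarith⟩
    · exact ⟨1, Or.inr rfl, by push_cast at hx; linarith, by push_cast at hx; linarith,
        by push_cast at hx; linarith⟩

lemma brick_signs (m : ℕ) (hm : 1 ≤ m) (i : Fin (m + m)) :
    (brickInt m i = 1 ∧ -1 ≤ brickFrac m i ∧ brickFrac m i ≤ 0) ∨
      (brickInt m i = -1 ∧ 0 ≤ brickFrac m i ∧ brickFrac m i ≤ 1) := by
  have hm' : (1 : ℝ) ≤ m := by exact_mod_cast hm
  unfold brickInt brickFrac
  by_cases h : i.val < m
  · left
    simp only [h, if_true, true_and]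
    have h1 : (1 : ℝ) / m ≤ 1 := by rw [div_le_one (by linarith)]; exact hm'
    have h2 : (0 : ℝ) ≤ 1 / m := by positivity
    constructor <;> linarith
  · right
    simp only [h, if_false, true_and]
    split_ifs <;> norm_num

lemma sum_mul_brickInt (m : ℕ) (e : Fin (m + m) → ℝ) :
    ∑ i, e i * brickInt m i
      = ∑ i : Fin m, e (Fin.castAdd m i) - ∑ i : Fin m, e (Fin.natAdd m i) := by
  rw [Fin.sum_univ_add]
  simp [brickInt, sub_eq_add_neg]

lemma sum_mul_brickFrac (m : ℕ) (hm : 1 ≤ m) (e : Fin (m + m) → ℝ) :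
    ∑ i, e i * brickFrac m i
      = e (Fin.natAdd m ⟨0, hm⟩) - (∑ i : Fin m, e (Fin.castAdd m i)) / m := by
  rw [Fin.sum_univ_add]
  have h : ∑ i : Fin m, e (Fin.natAdd m i) * brickFrac m (Fin.natAdd m i)
      = e (Fin.natAdd m ⟨0, hm⟩) := by
    rw [Finset.sum_eq_single (⟨0, hm⟩ : Fin m)]
    · simp [brickFrac]
    · intro i _ hi
      have : i.val ≠ 0 := fun h => hi (Fin.ext h)
      simp [brickFrac, this]
    · simp
  rw [h]
  simp [brickFrac, div_eq_mul_inv, Finset.sum_mul]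
  ring

/-- A selection of bricks whose first two column sums vanish is empty or complete. -/
lemma selection_trivial (m : ℕ) (hm : 1 ≤ m) (e : Fin (m + m) → ℝ)
    (he : ∀ i, e i = 0 ∨ e i = 1) (h0 : ∑ i, e i * brickInt m i = 0)
    (h1 : ∑ i, e i * brickFrac m i = 0) : (∀ i, e i = 0) ∨ ∀ i, e i = 1 := by
  have hm' : (m : ℝ) ≠ 0 := by exact_mod_cast (by omega : m ≠ 0)
  rw [sum_mul_brickInt] at h0
  rw [sum_mul_brickFrac m hm] at h1
  have hlo : ∀ i, 0 ≤ e i := fun i => by rcases he i with h | h <;> rw [h] <;> norm_num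
  have hhi : ∀ i, 0 ≤ 1 - e i := fun i => by rcases he i with h | h <;> rw [h] <;> norm_num
  have hS : ∑ i : Fin m, e (Fin.castAdd m i) = m * e (Fin.natAdd m ⟨0, hm⟩) := by
    field_simp at h1
    linarith
  rcases he (Fin.natAdd m ⟨0, hm⟩) with h | h
  · left
    rw [h, mul_zero] at hS
    have hT : ∑ i : Fin m, e (Fin.natAdd m i) = 0 := by linarith
    rw [Finset.sum_eq_zero_iff_of_nonneg fun i _ => hlo _] at hS hT
    exact fun i => Fin.addCases (fun k => hS k (Finset.mem_univ k))
      (fun k => hT k (Finset.mem_univ k)) i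
  · right
    rw [h, mul_one] at hS
    have hS' : ∑ i : Fin m, (1 - e (Fin.castAdd m i)) = 0 := by
      simp [Finset.sum_sub_distrib, hS]
    have hT' : ∑ i : Fin m, (1 - e (Fin.natAdd m i)) = 0 := by
      simp only [Finset.sum_sub_distrib, Finset.sum_const, Finset.card_univ, Fintype.card_fin,
        nsmul_eq_mul, mul_one]
      linarith
    rw [Finset.sum_eq_zero_iff_of_nonneg fun i _ => hhi _] at hS' hT'
    exact fun i => Fin.addCases (fun k => by linarith [hS' k (Finset.mem_univ k)])
      (fun k => by linarith [hT' k (Finset.mem_univ k)]) i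

lemma graverElt_mixedKer (m : ℕ) (hm : 1 ≤ m) :
    MixedKer (nfoldMat (m + m))
      (Finset.univ.filter fun c : Fin (m + m) × Fin 3 => c.2 = 0) (graverElt m) := by
  have hm' : (m : ℝ) ≠ 0 := by exact_mod_cast (by omega : m ≠ 0)
  have h0 := sum_mul_brickInt m fun _ => 1
  have h1 := sum_mul_brickFrac m hm fun _ => 1
  simp [hm'] at h0 h1
  rw [mixedKer_nfoldMat]
  refine ⟨?_, ?_, ?_⟩
  · intro j
    fin_cases j <;> simp [graverElt, Finset.sum_sub_distrib, h0, h1]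
  · intro i
    simp [graverElt]
  · intro i
    rcases brick_signs m hm i with h | h
    · exact ⟨1, by simp [graverElt, h.1]⟩
    · exact ⟨-1, by simp [graverElt, h.1]⟩

lemma le_vnorm1_graverElt (m : ℕ) (hm : 1 ≤ m) : ((m + m : ℕ) : ℝ) ≤ vnorm1 (graverElt m) := by
  unfold vnorm1
  rw [Fintype.sum_prod_type]
  calc ((m + m : ℕ) : ℝ) = ∑ _i : Fin (m + m), (1 : ℝ) := by simp
    _ ≤ _ := Finset.sum_le_sum fun i _ => by
      have hone : |graverElt m (i, 0)| = 1 := by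
        rcases brick_signs m hm i with h | h <;> simp [graverElt, h.1]
      rw [← hone]
      exact Finset.single_le_sum (f := fun j => |graverElt m (i, j)|)
        (fun j _ => abs_nonneg _) (Finset.mem_univ 0)

/-- for even `n ≥ 2`, the `n`-fold matrix with top blocks `I₃` and diagonal
blocks `(1,1,1)`, with the first coordinate of every brick integral, has a mixed Graver
basis element of `ℓ₁`-norm at least `n`. -/
theorem nfold_mixedGraver_lower_bound (n : ℕ) (hn : 2 ≤ n) (hev : Even n) :
    ∃ g : Fin n × Fin 3 → ℝ,
      InMixedGraver
        (Matrix.of fun (rw : Fin 3 ⊕ Fin n) (c : Fin n × Fin 3) =>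
          match rw with
          | Sum.inl j => if c.2 = j then (1 : ℤ) else 0
          | Sum.inr i => if c.1 = i then (1 : ℤ) else 0)
        (Finset.univ.filter fun c : Fin n × Fin 3 => c.2 = 0)
        g ∧
      (n : ℝ) ≤ vnorm1 g := by
  obtain ⟨m, rfl⟩ := hev
  have hm : 1 ≤ m := by omega
  refine ⟨graverElt m, ?_, le_vnorm1_graverElt m hm⟩
  suffices h : InMixedGraver (nfoldMat (m + m))
      (Finset.univ.filter fun c : Fin (m + m) × Fin 3 => c.2 = 0) (graverElt m) by
    convert h using 1
    ext r c
    cases r <;> rfl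
  refine Or.inl ⟨graverElt_mixedKer m hm, ⟨(⟨0, by omega⟩, 0), by simp, ?_⟩, ?_⟩
  · rcases brick_signs m hm ⟨0, by omega⟩ with h | h <;> simp [graverElt, h.1]
  · intro y hy hy0 hyg hc
    rw [mixedKer_nfoldMat] at hy
    obtain ⟨hcol, hbrick, hint⟩ := hy
    have hsel : ∀ i, ∃ e : ℝ, (e = 0 ∨ e = 1) ∧ y (i, 0) = e * brickInt m i ∧
        y (i, 1) = e * brickFrac m i ∧ y (i, 2) = e * (-brickInt m i - brickFrac m i) := by
      intro i
      obtain ⟨z, hz⟩ := hint i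
      exact brick_selection hz (hbrick i) (brick_signs m hm i) (hc (i, 0)) (hc (i, 1)) (hc (i, 2))
    choose e he e0 e1 e2 using hsel
    have hcol0 := hcol 0
    have hcol1 := hcol 1
    simp only [e0] at hcol0
    simp only [e1] at hcol1
    rcases selection_trivial m hm e he hcol0 hcol1 with h | h
    · apply hy0
      ext ⟨i, j⟩
      fin_cases j <;> simp [e0, e1, e2, h]
    · apply hyg
      ext ⟨i, j⟩
      fin_cases j <;> simp [e0, e1, e2, h, graverElt]
end

section
/- Let a ∈ ℝ with 0 < a < 1 and let g = (−1, a, 1−a) ∈ ℝ³. Then g₀ + g₁ + g₂ = 0 and g₀ ∈ ℤ, and g is ⊑-minimal in the mixed kernel of the row vector (1,1,1) with first coordinate integral: every y = (y₀, y₁, y₂) ∈ ℝ³ with y₀ ∈ ℤ, y₀ + y₁ + y₂ = 0, and y ⊑ g satisfies y = (0,0,0) or y = g. -/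
/-! Conformality to `g = (-1, a, 1 - a)` confines `y` to the box `[-1, 0] × [0, a] × [0, 1 - a]`.
Integrality leaves `y 0 = 0` or `y 0 = -1`, so `y 1 + y 2` is `0` or `1`. These are the minimum and
the maximum of `y 1 + y 2` over the box, each attained at one corner only: `y = 0` or `y = g`. -/

/-- for `0 < a < 1`, the vector `g = (−1, a, 1−a)` sums to zero, has
integral first coordinate, and is `⊑`-minimal in the mixed kernel of the row `(1,1,1)`
with first coordinate integral. -/
theorem brick_conformal_minimal (a : ℝ) (ha0 : 0 < a) (ha1 : a < 1) :
    let g : Fin 3 → ℝ := ![(-1 : ℝ), a, 1 - a]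
    (g 0 + g 1 + g 2 = 0) ∧ (∃ z : ℤ, g 0 = z) ∧
      ∀ y : Fin 3 → ℝ, (∃ z : ℤ, y 0 = z) → y 0 + y 1 + y 2 = 0 →
        (∀ i, |y i| ≤ |g i| ∧ 0 ≤ y i * g i) → y = 0 ∨ y = g := by
  intro g
  have g0 : g 0 = -1 := rfl
  have g1 : g 1 = a := rfl
  have g2 : g 2 = 1 - a := rfl
  refine ⟨by rw [g0, g1, g2]; ring, ⟨-1, by rw [g0]; norm_num⟩, ?_⟩
  rintro y ⟨z, hz⟩ hsum hy
  have hb : 0 < 1 - a := by linarith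
  obtain ⟨h0, s0⟩ := hy 0
  obtain ⟨h1, s1⟩ := hy 1
  obtain ⟨h2, s2⟩ := hy 2
  rw [g0] at h0 s0
  rw [g1, abs_of_pos ha0] at h1
  rw [g2, abs_of_pos hb] at h2
  rw [g1] at s1
  rw [g2] at s2
  have p1 : 0 ≤ y 1 := nonneg_of_mul_nonneg_left s1 ha0
  have p2 : 0 ≤ y 2 := nonneg_of_mul_nonneg_left s2 hb
  have u1 := (abs_le.mp h1).2
  have u2 := (abs_le.mp h2).2
  have z0 : z ≤ 0 := by
    have : (z : ℝ) ≤ 0 := by linarith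
    exact_mod_cast this
  have z1 : -1 ≤ z := by
    have : (-1 : ℝ) ≤ z := by linarith
    exact_mod_cast this
  obtain rfl | rfl : z = 0 ∨ z = -1 := by omega
  · left
    push_cast at hz
    ext i
    fin_cases i <;> simp <;> linarith
  · right
    push_cast at hz
    ext i
    fin_cases i <;> simp [g] <;> linarith
end

section
/- (Steinitz Lemma) Let ‖·‖ be any norm on ℝ^d, and let x₁, …, x_n ∈ ℝ^d be vectors with ‖x_i‖ ≤ 1 for every i ∈ [n] and Σ_{i=1}^n x_i = 0. Then there exists a permutation π of [n] such that for every k ∈ [n], ‖Σ_{i=1}^k x_{π(i)}‖ ≤ d. -/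
open BigOperators

/-!
The proof is the linear-programming argument of Grinberg and Sevastyanov, building the ordering
from its last element backwards.

Call a set `S` of indices *balanced* (`Balanced`) if there are weights `f i ∈ [0, 1]` on `S` with
total `|S| - d` and `∑ f i • x i = 0`. For such an `S`,
`∑_S x i = ∑_S (1 - f i) • x i` has norm at most `∑_S (1 - f i) = d` (`Balanced.norm_sum_le`).
The full index set is balanced, with constant weights `(n - d) / n`.

A balanced set with more than `d` elements stays balanced after removal of a suitable element
(`Balanced.exists_erase`). Rescaling the weights shows that the polytope of weights on `S` with
total `|S| - 1 - d` is nonempty; take an extreme point `f`. The deficits `1 - f i` sum to `d + 1`,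
so if `f` had no zero on `S`, at least `d + 2` coordinates would lie strictly between `0` and `1`.
The `d + 1` linear equations then leave a direction in which `f` can be moved both ways inside the
polytope, contradicting extremality. So `f` vanishes somewhere, and that index can be removed.

Removing elements one at a time gives a chain of sets whose sums are all bounded by `d`: by
balancedness as long as at least `d` elements are left, and by the triangle inequality afterwards.
-/

namespace Steinitz

variable {d : ℕ} {ι : Type*}

/-- The set of indices `S` carries weights in `[0, 1]` with total `|S| - d` for which the weighted
sum of the vectors `x i` vanishes. Values of the weight function outside `S` are irrelevant. -/
def Balanced (x : ι → Fin d → ℝ) (S : Finset ι) : Prop :=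
  ∃ f : ι → ℝ, (∀ i, 0 ≤ f i) ∧ (∀ i, f i ≤ 1) ∧ ∑ i ∈ S, f i = (S.card : ℝ) - d ∧
    ∑ i ∈ S, f i • x i = 0

/-- The polytope of weights in `[0, 1]` with total `c` on `S` annihilating the vectors `x i`. -/
def polytope (x : ι → Fin d → ℝ) (S : Finset ι) (c : ℝ) : Set (ι → ℝ) :=
  {f | f ∈ Set.Icc (0 : ι → ℝ) 1 ∧ ∑ i ∈ S, f i = c ∧ ∑ i ∈ S, f i • x i = 0}

lemma isCompact_polytope (x : ι → Fin d → ℝ) (S : Finset ι) (c : ℝ) :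
    IsCompact (polytope x S c) := by
  have hI : IsCompact (Set.Icc (0 : ι → ℝ) 1) := by
    rw [← Set.pi_univ_Icc]
    exact isCompact_univ_pi fun i => isCompact_Icc
  refine hI.inter_right (IsClosed.inter ?_ ?_)
  · exact isClosed_eq (by fun_prop) continuous_const
  · exact isClosed_eq (by fun_prop) continuous_const

lemma seminorm_sum_le (p : Seminorm ℝ (Fin d → ℝ)) (S : Finset ι) (g : ι → Fin d → ℝ) :
    p (∑ i ∈ S, g i) ≤ ∑ i ∈ S, p (g i) :=
  Finset.le_sum_of_subadditive p (map_zero p).le (map_add_le_add p) S g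

lemma Balanced.norm_sum_le (p : Seminorm ℝ (Fin d → ℝ)) {x : ι → Fin d → ℝ}
    (hx : ∀ i, p (x i) ≤ 1) {S : Finset ι} (h : Balanced x S) : p (∑ i ∈ S, x i) ≤ d := by
  obtain ⟨f, h0, h1, hs, hv⟩ := h
  have e : ∑ i ∈ S, x i = ∑ i ∈ S, (1 - f i) • x i := by
    simp [sub_smul, Finset.sum_sub_distrib, hv]
  calc p (∑ i ∈ S, x i) ≤ ∑ i ∈ S, p ((1 - f i) • x i) := by
        rw [e]; exact seminorm_sum_le p S _
    _ ≤ ∑ i ∈ S, (1 - f i) := by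
        refine Finset.sum_le_sum fun i _ => ?_
        rw [map_smul_eq_mul, Real.norm_of_nonneg (sub_nonneg.2 (h1 i))]
        exact mul_le_of_le_one_right (sub_nonneg.2 (h1 i)) (hx i)
    _ = d := by simp [Finset.sum_sub_distrib, hs]

/-- More than `d + 1` vectors in `ℝ^d` admit a nontrivial affine dependence, written here as a
function on the whole index type supported on `F`. -/
lemma exists_dependence (x : ι → Fin d → ℝ) {F : Finset ι} (hF : d + 1 < F.card) :
    ∃ g : ι → ℝ, (∀ i ∉ F, g i = 0) ∧ g ≠ 0 ∧ ∑ i ∈ F, g i = 0 ∧ ∑ i ∈ F, g i • x i = 0 := by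
  classical
  have hli : ¬ LinearIndependent ℝ (fun i : F => ((x i, 1) : (Fin d → ℝ) × ℝ)) := by
    intro h
    have := h.fintype_card_le_finrank
    simp at this
    omega
  obtain ⟨g, hg, i, hi⟩ := Fintype.not_linearIndependent_iff.1 hli
  have hg1 := congrArg Prod.fst hg
  have hg2 := congrArg Prod.snd hg
  simp only [Prod.fst_sum, Prod.snd_sum, Prod.smul_mk, Prod.fst_zero, Prod.snd_zero, smul_eq_mul,
    mul_one] at hg1 hg2
  refine ⟨fun j => if h : j ∈ F then g ⟨j, h⟩ else 0, fun j hj => dif_neg hj, ?_, ?_, ?_⟩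
  · intro h
    apply hi
    simpa using congrFun h i
  · rw [← Finset.sum_coe_sort]
    simpa using hg2
  · rw [← Finset.sum_coe_sort]
    simpa using hg1

/-- A perturbation supported where the weights are strictly between `0` and `1` stays in the cube
in both directions, after scaling. -/
lemma exists_step {F : Finset ι} {f g : ι → ℝ} (hF : ∀ i ∈ F, 0 < f i ∧ f i < 1)
    (hf : f ∈ Set.Icc (0 : ι → ℝ) 1) (hg : ∀ i ∉ F, g i = 0) :
    ∃ t : ℝ, 0 < t ∧ f + t • g ∈ Set.Icc (0 : ι → ℝ) 1 ∧ f - t • g ∈ Set.Icc (0 : ι → ℝ) 1 := by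
  have key : ∀ᶠ t : ℝ in nhdsWithin 0 (Set.Ioi 0), ∀ i ∈ F,
      (0 < f i + t * g i ∧ f i + t * g i < 1) ∧ (0 < f i - t * g i ∧ f i - t * g i < 1) := by
    rw [Filter.eventually_all_finset]
    intro i hi
    apply Filter.Eventually.filter_mono nhdsWithin_le_nhds
    have c1 : Filter.Tendsto (fun t : ℝ => f i + t * g i) (nhds 0) (nhds (f i)) := by
      have : Continuous (fun t : ℝ => f i + t * g i) := by fun_prop
      simpa using this.tendsto 0
    have c2 : Filter.Tendsto (fun t : ℝ => f i - t * g i) (nhds 0) (nhds (f i)) := by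
      have : Continuous (fun t : ℝ => f i - t * g i) := by fun_prop
      simpa using this.tendsto 0
    exact (c1.eventually (Ioo_mem_nhds (hF i hi).1 (hF i hi).2)).and
      (c2.eventually (Ioo_mem_nhds (hF i hi).1 (hF i hi).2))
  obtain ⟨t, ht, htpos⟩ := (key.and self_mem_nhdsWithin).exists
  refine ⟨t, htpos, ⟨fun i => ?_, fun i => ?_⟩, ⟨fun i => ?_, fun i => ?_⟩⟩ <;>
  · by_cases hi : i ∈ F
    · have := ht i hi
      simp only [Pi.add_apply, Pi.sub_apply, Pi.smul_apply, smul_eq_mul, Pi.zero_apply,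
        Pi.one_apply]
      linarith [this.1.1, this.1.2, this.2.1, this.2.2]
    · simpa [hg i hi] using (by first | exact hf.1 i | exact hf.2 i)

/-- An extreme point of the polytope with total `|S| - 1 - d` has a zero on `S`. -/
lemma exists_zero_of_extreme {x : ι → Fin d → ℝ} {S : Finset ι} {f : ι → ℝ}
    (hf : f ∈ (polytope x S ((S.card : ℝ) - 1 - d)).extremePoints ℝ) : ∃ i ∈ S, f i = 0 := by
  classical
  by_contra! hne
  obtain ⟨⟨hI, hs, hv⟩, hext⟩ := mem_extremePoints.1 hf
  set F := S.filter fun i => f i < 1 with hFdef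
  have hFS : F ⊆ S := Finset.filter_subset _ _
  have hpos : ∀ i ∈ S, 0 < f i := fun i hi => lt_of_le_of_ne (hI.1 i) (hne i hi).symm
  have hdef : ∑ i ∈ F, (1 - f i) = (d : ℝ) + 1 := by
    have : ∑ i ∈ F, (1 - f i) = ∑ i ∈ S, (1 - f i) := by
      refine Finset.sum_subset hFS fun i hi hiF => ?_
      have h1 : f i ≤ 1 := hI.2 i
      have h2 : ¬ f i < 1 := fun h => hiF (Finset.mem_filter.2 ⟨hi, h⟩)
      linarith
    rw [this, Finset.sum_sub_distrib, hs, Finset.sum_const, nsmul_eq_mul, mul_one]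
    ring
  have hne' : F.Nonempty := by
    rw [Finset.nonempty_iff_ne_empty]
    intro h
    rw [h, Finset.sum_empty] at hdef
    have : (0 : ℝ) ≤ d := Nat.cast_nonneg d
    linarith
  have hcard : d + 1 < F.card := by
    have : ∑ i ∈ F, (1 - f i) < ∑ i ∈ F, (1 : ℝ) :=
      Finset.sum_lt_sum_of_nonempty hne' fun i hi => by linarith [hpos i (hFS hi)]
    rw [hdef] at this
    simp only [Finset.sum_const, nsmul_eq_mul, mul_one] at this
    exact_mod_cast this
  obtain ⟨g, hg0, hgne, hg1, hg2⟩ := exists_dependence x hcard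
  have hg1S : ∑ i ∈ S, g i = 0 := by
    rw [← hg1]
    exact (Finset.sum_subset hFS fun i _ hi => hg0 i hi).symm
  have hg2S : ∑ i ∈ S, g i • x i = 0 := by
    rw [← hg2]
    exact (Finset.sum_subset hFS fun i _ hi => by simp [hg0 i hi]).symm
  obtain ⟨t, ht, hp, hm⟩ := exists_step (F := F)
    (fun i hi => ⟨hpos i (hFS hi), (Finset.mem_filter.1 hi).2⟩) hI hg0
  have hP : f + t • g ∈ polytope x S ((S.card : ℝ) - 1 - d) := by
    refine ⟨hp, ?_, ?_⟩
    · simp [Finset.sum_add_distrib, ← Finset.mul_sum, hg1S, hs]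
    · simp [add_smul, mul_smul, Finset.sum_add_distrib, ← Finset.smul_sum, hg2S, hv]
  have hM : f - t • g ∈ polytope x S ((S.card : ℝ) - 1 - d) := by
    refine ⟨hm, ?_, ?_⟩
    · simp [Finset.sum_sub_distrib, ← Finset.mul_sum, hg1S, hs]
    · simp [sub_smul, mul_smul, Finset.sum_sub_distrib, ← Finset.smul_sum, hg2S, hv]
  have hseg : f ∈ openSegment ℝ (f + t • g) (f - t • g) := by
    refine ⟨1 / 2, 1 / 2, by norm_num, by norm_num, by norm_num, ?_⟩
    module
  have h := (hext _ hP _ hM hseg).1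
  have : t • g = 0 := by simpa using h
  exact hgne ((smul_eq_zero.1 this).resolve_left ht.ne')

lemma Balanced.exists_erase [DecidableEq ι] {x : ι → Fin d → ℝ} {S : Finset ι}
    (h : Balanced x S) (hS : d < S.card) : ∃ i ∈ S, Balanced x (S.erase i) := by
  obtain ⟨f, h0, h1, hs, hv⟩ := h
  have hS' : (d : ℝ) + 1 ≤ S.card := by exact_mod_cast hS
  have hne : (polytope x S ((S.card : ℝ) - 1 - d)).Nonempty := by
    -- the scaling factor turns the total `|S| - d` into `|S| - 1 - d`
    set r : ℝ := ((S.card : ℝ) - 1 - d) / (S.card - d) with hr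
    have hr0 : 0 ≤ r := div_nonneg (by linarith) (by linarith)
    have hr1 : r ≤ 1 := div_le_one_of_le₀ (by linarith) (by linarith)
    refine ⟨fun i => r * f i, ⟨fun i => mul_nonneg hr0 (h0 i),
      fun i => mul_le_one₀ hr1 (h0 i) (h1 i)⟩, ?_, ?_⟩
    · rw [← Finset.mul_sum, hs, hr]
      exact div_mul_cancel₀ _ (by linarith)
    · simp [mul_smul, ← Finset.smul_sum, hv]
  obtain ⟨g, hg⟩ := (isCompact_polytope x S _).extremePoints_nonempty hne
  obtain ⟨i, hi, hgi⟩ := exists_zero_of_extreme hg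
  obtain ⟨hI, hgs, hgv⟩ := hg.1
  refine ⟨i, hi, g, hI.1, hI.2, ?_, ?_⟩
  · rw [Finset.sum_erase _ hgi, hgs, Finset.card_erase_of_mem hi,
      Nat.cast_sub (Finset.card_pos.2 ⟨i, hi⟩)]
    simp
  · rw [Finset.sum_erase _ (by simp [hgi]), hgv]

/-- Every index set which is balanced, or has fewer than `d` elements, can be enumerated with all
prefix sums bounded by `d`. The enumeration is a function on `ℕ`, of which only the values below
`m` matter. -/
lemma exists_enumeration [DecidableEq ι] [Nonempty ι] (p : Seminorm ℝ (Fin d → ℝ))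
    {x : ι → Fin d → ℝ} (hx : ∀ i, p (x i) ≤ 1) (m : ℕ) :
    ∀ S : Finset ι, S.card = m → (d ≤ m → Balanced x S) →
      ∃ e : ℕ → ι, (Finset.range m).image e = S ∧
        ∀ k ≤ m, p (∑ i ∈ Finset.range k, x (e i)) ≤ d := by
  induction m with
  | zero =>
    intro S hS _
    refine ⟨fun _ => Classical.arbitrary ι, ?_, fun k hk => ?_⟩
    · simp [Finset.card_eq_zero.1 hS]
    · simp [Nat.le_zero.1 hk]
  | succ m ih =>
    intro S hS hB
    obtain ⟨i, hi, hBi⟩ : ∃ i ∈ S, (d ≤ m → Balanced x (S.erase i)) := by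
      by_cases hd : d ≤ m
      · obtain ⟨i, hi, h⟩ := (hB (by omega)).exists_erase (by omega)
        exact ⟨i, hi, fun _ => h⟩
      · obtain ⟨i, hi⟩ := Finset.card_pos.1 (by omega : 0 < S.card)
        exact ⟨i, hi, fun h => absurd h hd⟩
    have hcard : (S.erase i).card = m := by rw [Finset.card_erase_of_mem hi, hS]; rfl
    obtain ⟨e, he, hpre⟩ := ih (S.erase i) hcard hBi
    have hold : ∀ j < m, Function.update e m i j = e j := fun j hj =>
      Function.update_of_ne hj.ne _ _
    have himg : (Finset.range (m + 1)).image (Function.update e m i) = S := by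
      rw [Finset.range_add_one, Finset.image_insert, Function.update_self,
        Finset.image_congr (g := e) (fun j hj => hold j (by simpa using hj)), he,
        Finset.insert_erase hi]
    refine ⟨Function.update e m i, himg, fun k hk => ?_⟩
    rcases Nat.lt_or_ge m k with hk' | hk'
    · obtain rfl : k = m + 1 := by omega
      have hinj : Set.InjOn (Function.update e m i) (Finset.range (m + 1)) := by
        rw [← Finset.card_image_iff, himg, hS, Finset.card_range]
      rw [← Finset.sum_image (f := x) hinj, himg]
      by_cases hd : d ≤ m + 1
      · exact (hB hd).norm_sum_le p hx
      · calc p (∑ i ∈ S, x i) ≤ ∑ i ∈ S, p (x i) := seminorm_sum_le p S x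
          _ ≤ ∑ i ∈ S, (1 : ℝ) := Finset.sum_le_sum fun i _ => hx i
          _ = ((m + 1 : ℕ) : ℝ) := by simp [hS]
          _ ≤ d := by exact_mod_cast (by omega : m + 1 ≤ d)
    · rw [Finset.sum_congr rfl fun j hj => by
        rw [hold j (lt_of_lt_of_le (Finset.mem_range.1 hj) hk')]]
      exact hpre k hk'

end Steinitz

open Steinitz

/-- Steinitz Lemma: vectors of norm at most 1 summing to zero can be
permuted so that all prefix sums have norm at most `d`, for any norm on `ℝ^d`. -/
theorem steinitz_lemma (d n : ℕ) (Nrm : (Fin d → ℝ) → ℝ)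
    (hdef : ∀ v, Nrm v = 0 ↔ v = 0)
    (hadd : ∀ v w, Nrm (v + w) ≤ Nrm v + Nrm w)
    (hsmul : ∀ (c : ℝ) (v), Nrm (c • v) = |c| * Nrm v)
    (x : Fin n → Fin d → ℝ) (hx : ∀ i, Nrm (x i) ≤ 1)
    (hsum : ∑ i, x i = 0) :
    ∃ π : Equiv.Perm (Fin n), ∀ k : Fin n,
      Nrm (∑ i ∈ Finset.univ.filter fun i => i ≤ k, x (π i)) ≤ d := by
  rcases Nat.eq_zero_or_pos n with rfl | hn
  · exact ⟨1, fun k => k.elim0⟩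
  have : Nonempty (Fin n) := ⟨⟨0, hn⟩⟩
  let p : Seminorm ℝ (Fin d → ℝ) := Seminorm.of Nrm hadd hsmul
  have hB : d ≤ n → Balanced x Finset.univ := by
    intro hd
    have hn' : (0 : ℝ) < n := by exact_mod_cast hn
    have hd' : (d : ℝ) ≤ n := by exact_mod_cast hd
    have hd0 : (0 : ℝ) ≤ d := Nat.cast_nonneg d
    refine ⟨fun _ => ((n : ℝ) - d) / n, fun _ => div_nonneg (by linarith) hn'.le,
      fun _ => div_le_one_of_le₀ (by linarith) hn'.le, ?_, ?_⟩
    · simp only [Finset.sum_const, Finset.card_univ, Fintype.card_fin, nsmul_eq_mul]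
      field_simp
    · rw [← Finset.smul_sum, hsum, smul_zero]
  obtain ⟨e, he, hpre⟩ := exists_enumeration p (x := x) hx n Finset.univ (by simp) hB
  have hsurj : Function.Surjective fun i : Fin n => e i := by
    intro j
    obtain ⟨i, hi, hij⟩ := Finset.mem_image.1 (he ▸ Finset.mem_univ j)
    exact ⟨⟨i, Finset.mem_range.1 hi⟩, hij⟩
  refine ⟨Equiv.ofBijective _ (Finite.surjective_iff_bijective.1 hsurj), fun k => ?_⟩
  have hk := hpre (k + 1) k.2
  have : ∑ i ∈ Finset.univ.filter (fun i => i ≤ k), x (e i)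
      = ∑ i ∈ Finset.range (k + 1), x (e i) := by
    refine Finset.sum_bij (fun i _ => (i : ℕ)) (fun i hi => ?_) (fun a _ b _ h => Fin.ext h)
      (fun j hj => ?_) (fun _ _ => rfl)
    · exact Finset.mem_range.2 (Nat.lt_succ_iff.2 (Finset.mem_filter.1 hi).2)
    · have hj' := Finset.mem_range.1 hj
      exact ⟨⟨j, by omega⟩, Finset.mem_filter.2 ⟨Finset.mem_univ _, Nat.lt_succ_iff.1 hj'⟩, rfl⟩
  rw [← this] at hk
  exact hk
end

section
/- There exists a function f : ℕ × ℕ → ℕ such that the following holds for all positive integers d, Δ, n. Let T₁, …, T_n be finite multisets of vectors of ℤ^d, each vector of ℓ∞-norm at most Δ, let b ∈ ℤ^d, and let ε be a positive integer such that ‖(Σ_{v ∈ T_i} v) − b‖∞ < ε for all i ∈ [n]. If ‖b‖∞ > ε · f(d, Δ), then there exist non-empty sub-multisets S_i ⊆ T_i for all i ∈ [n] and a vector b' ∈ ℤ^d with ‖b'‖∞ ≤ f(d, Δ) such that Σ_{v ∈ S_i} v = b' for every i ∈ [n]. -/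
/-!
Fix `d` and `Δ`, so that all vectors lie in the finite box `W = [-Δ, Δ]^d`. Call a vector of `W`
frequent in `T i` if its multiplicity exceeds a small fixed fraction of `|b k|`, where `k` is a
coordinate with `|b k| > ε f`. Discarding the infrequent vectors changes the sum of `T i` by a small
fraction of `|b k|` only, so the frequent parts still have sums close to `b`.

The sets of frequent vectors form a family `F` of subsets of `W`, and there are finitely many
possible families. The key fact (`common_or_bounded`) is a dichotomy for a fixed family:
either the monoids generated by its members share a nonzero vector, or any vector `b` that is
within `E` of all of these monoids satisfies `‖b‖ ≤ C E`. It follows from Gordan's lemma: the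
monoid of solutions `(z, e⁺, e⁻, b⁺, b⁻) ≥ 0` of `∑ z_L(v) v = b + e_L` is finitely generated. A
generator with `e⁺ = e⁻ = 0` and `b ≠ 0` gives the first alternative. Otherwise every generator
satisfies `‖b‖ ≤ C ‖e‖₁`, and this inequality is inherited by sums.

In the situation of the theorem the second alternative is excluded because `b` is large. The common
vector in the first alternative has coefficients bounded in terms of `d` and `Δ`, and these are
at most the multiplicities of the frequent vectors, so it is a sub-multiset sum of every `T i`.
-/

/-- The system `φ i (z i) = b + e i` over nonnegative integers: solutions are tuples
`(z, e⁺, e⁻, b⁺, b⁻)`, where `b = b⁺ - b⁻` and `e = e⁺ - e⁻`. -/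
def solutionMonoid {I W : Type} {d : ℕ} (φ : I → (W → ℕ) →+ (Fin d → ℤ)) :
    AddSubmonoid ((I → W → ℕ) × (I → Fin d → ℕ) × (I → Fin d → ℕ) ×
      (Fin d → ℕ) × (Fin d → ℕ)) where
  carrier := {m | ∀ i k, φ i (m.1 i) k =
    ((m.2.2.2.1 k : ℤ) - m.2.2.2.2 k) + (m.2.1 i k - m.2.2.1 i k)}
  zero_mem' := by intro i k; simp
  add_mem' := by
    intro x y hx hy i k
    have h1 := hx i k
    have h2 := hy i k
    simp only [Prod.fst_add, Prod.snd_add, Pi.add_apply, map_add, Nat.cast_add]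
    linarith

lemma solutionMonoid_fg {I W : Type} [Finite I] [Finite W] {d : ℕ}
    (φ : I → (W → ℕ) →+ (Fin d → ℤ)) : (solutionMonoid φ).FG := by
  apply AddSubmonoid.fg_of_subtractive
  intro x hx y hxy i k
  have h1 := hx i k
  have h2 := hxy i k
  simp only [Prod.fst_add, Prod.snd_add, Pi.add_apply, map_add, Nat.cast_add] at h2
  linarith

/-- Either the images of the `φ i` share a nonzero vector (bounded by `C`, with preimages bounded
by `C`), or a vector at distance at most `E` from
all these images has norm at most `C * E`. -/
lemma common_or_bounded {I W : Type} [Fintype I] [Fintype W] {d : ℕ}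
    (φ : I → (W → ℕ) →+ (Fin d → ℤ)) :
    ∃ C : ℕ,
      (∃ (z : I → W → ℕ) (w : Fin d → ℤ), (∀ i v, z i v ≤ C) ∧ w ≠ 0 ∧ (∀ k, |w k| ≤ (C : ℤ)) ∧
        ∀ i, φ i (z i) = w) ∨
      (∀ (z : I → W → ℕ) (b : Fin d → ℤ) (E : ℕ),
        (∀ i k, |φ i (z i) k - b k| ≤ (E : ℤ)) → ∀ k, |b k| ≤ (C : ℤ) * E) := by
  obtain ⟨S, hS⟩ := solutionMonoid_fg φ
  by_cases hg : ∃ g ∈ S, g.2.1 = 0 ∧ g.2.2.1 = 0 ∧ g.2.2.2.1 ≠ g.2.2.2.2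
  · obtain ⟨g, hgS, h1, h2, h3⟩ := hg
    have hgP : g ∈ solutionMonoid φ := hS ▸ AddSubmonoid.subset_closure hgS
    refine ⟨(∑ i, ∑ v, g.1 i v) + ∑ k, (g.2.2.2.1 k + g.2.2.2.2 k), Or.inl
      ⟨g.1, fun k => (g.2.2.2.1 k : ℤ) - g.2.2.2.2 k, ?_, ?_, ?_, ?_⟩⟩
    · intro i v
      have a1 : g.1 i v ≤ ∑ v, g.1 i v :=
        Finset.single_le_sum (f := fun v => g.1 i v) (fun _ _ => Nat.zero_le _) (Finset.mem_univ v)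
      have a2 : ∑ v, g.1 i v ≤ ∑ i, ∑ v, g.1 i v :=
        Finset.single_le_sum (f := fun i => ∑ v, g.1 i v) (fun _ _ => Nat.zero_le _)
          (Finset.mem_univ i)
      omega
    · intro h0
      apply h3
      funext k
      have := congrFun h0 k
      simp only [Pi.zero_apply] at this
      omega
    · intro k
      have a1 := Finset.single_le_sum (f := fun k => g.2.2.2.1 k + g.2.2.2.2 k)
        (fun _ _ => Nat.zero_le _) (Finset.mem_univ k)
      rw [abs_le]
      constructor <;> push_cast <;> zify at a1 <;>
        have : (0 : ℤ) ≤ ∑ i, ∑ v, (g.1 i v : ℤ) := by positivity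
      all_goals omega
    · intro i
      funext k
      have := hgP i k
      simpa [h1, h2] using this
  · push Not at hg
    set D : ℕ := ∑ g ∈ S, ∑ k, (g.2.2.2.1 k + g.2.2.2.2 k) with hD
    refine ⟨D * (Fintype.card I * d), Or.inr ?_⟩
    -- the linear bound `‖b‖ ≤ D * ‖e‖₁` holds for generators, hence for all solutions
    have key : ∀ m ∈ solutionMonoid φ, ∀ k, |(m.2.2.2.1 k : ℤ) - m.2.2.2.2 k| ≤
        (D : ℤ) * ∑ i, ∑ j, ((m.2.1 i j : ℤ) + m.2.2.1 i j) := by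
      intro m hm
      rw [← hS] at hm
      induction hm using AddSubmonoid.closure_induction with
      | mem g hgS =>
        intro k
        by_cases h0 : g.2.1 = 0 ∧ g.2.2.1 = 0
        · have := hg g hgS h0.1 h0.2
          simp [this, h0.1, h0.2]
        · have hpos : 1 ≤ ∑ i, ∑ j, (g.2.1 i j + g.2.2.1 i j) := by
            by_contra hlt
            have hz : ∑ i, ∑ j, (g.2.1 i j + g.2.2.1 i j) = 0 := by omega
            simp only [Finset.sum_eq_zero_iff, Finset.mem_univ, true_imp_iff,
              Nat.add_eq_zero_iff] at hz
            exact h0 ⟨by funext i j; exact (hz i j).1, by funext i j; exact (hz i j).2⟩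
          have a1 := Finset.single_le_sum (f := fun k => g.2.2.2.1 k + g.2.2.2.2 k)
            (fun _ _ => Nat.zero_le _) (Finset.mem_univ k)
          have a2 := Finset.single_le_sum (s := S)
            (f := fun g => ∑ k, (g.2.2.2.1 k + g.2.2.2.2 k))
            (fun _ _ => Nat.zero_le _) hgS
          simp only [← hD] at a1 a2
          have a3 : |(g.2.2.2.1 k : ℤ) - g.2.2.2.2 k| ≤ D := by
            rw [abs_le]; constructor <;> omega
          zify at hpos
          nlinarith
      | zero => intro k; simp
      | add x y _ _ hx hy =>
        intro k
        have h1 := hx k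
        have h2 := hy k
        have h3 := abs_add_le ((x.2.2.2.1 k : ℤ) - x.2.2.2.2 k) ((y.2.2.2.1 k : ℤ) - y.2.2.2.2 k)
        simp only [Prod.fst_add, Prod.snd_add, Pi.add_apply, Nat.cast_add]
        have e1 : (x.2.2.2.1 k : ℤ) + y.2.2.2.1 k - (x.2.2.2.2 k + y.2.2.2.2 k) =
          ((x.2.2.2.1 k : ℤ) - x.2.2.2.2 k) + ((y.2.2.2.1 k : ℤ) - y.2.2.2.2 k) := by ring
        have e2 : ∑ i, ∑ j, ((x.2.1 i j : ℤ) + y.2.1 i j + (x.2.2.1 i j + y.2.2.1 i j)) =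
          ∑ i, ∑ j, ((x.2.1 i j : ℤ) + x.2.2.1 i j) +
          ∑ i, ∑ j, ((y.2.1 i j : ℤ) + y.2.2.1 i j) := by
          simp only [← Finset.sum_add_distrib]
          refine Finset.sum_congr rfl fun i _ => Finset.sum_congr rfl fun j _ => by ring
        rw [e1, e2, mul_add]
        linarith
    intro z b E hE k
    have hm := key (z, fun i k => (φ i (z i) k - b k).toNat,
      fun i k => (-(φ i (z i) k - b k)).toNat, fun k => (b k).toNat, fun k => (-b k).toNat)
      (by
        intro i k
        simp only
        rw [Int.toNat_sub_toNat_neg, Int.toNat_sub_toNat_neg]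
        ring) k
    simp only [Int.toNat_sub_toNat_neg] at hm
    refine hm.trans ?_
    have hsum : ∑ i, ∑ j, (((φ i (z i) j - b j).toNat : ℤ) + (-(φ i (z i) j - b j)).toNat) ≤
        ∑ _i : I, ∑ _j : Fin d, (E : ℤ) := by
      refine Finset.sum_le_sum fun i _ => Finset.sum_le_sum fun j _ => ?_
      have := abs_le.1 (hE i j)
      omega
    have hcard : ∑ _i : I, ∑ _j : Fin d, (E : ℤ) = Fintype.card I * d * E := by
      simp [mul_assoc]
    rw [hcard] at hsum
    push_cast
    calc _ ≤ (D : ℤ) * (Fintype.card I * d * E) := by gcongr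
      _ = _ := by ring

/-- The box `[-Δ, Δ]^d` of integer vectors. -/
noncomputable abbrev box (d Δ : ℕ) : Finset (Fin d → ℤ) :=
  Finset.Icc (fun _ => -(Δ : ℤ)) (fun _ => (Δ : ℤ))

/-- The sum of the vectors in `L`, weighted by multiplicities; vectors outside `L` are ignored. -/
noncomputable def restrictedSum (d Δ : ℕ) (L : Finset (box d Δ)) : (box d Δ → ℕ) →+ (Fin d → ℤ) where
  toFun z := ∑ v ∈ L, z v • (v : Fin d → ℤ)
  map_zero' := by simp
  map_add' := by intro x y; simp [add_smul, Finset.sum_add_distrib]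

/-- The dichotomy with one constant for all families of subsets of the box. -/
lemma uniform_dichotomy (d Δ : ℕ) :
    ∃ C : ℕ, ∀ F : Finset (Finset (box d Δ)),
      (∃ (z : F → box d Δ → ℕ) (w : Fin d → ℤ), (∀ i v, z i v ≤ C) ∧ w ≠ 0 ∧
        (∀ k, |w k| ≤ (C : ℤ)) ∧ ∀ i : F, restrictedSum d Δ i (z i) = w) ∨
      (∀ (z : F → box d Δ → ℕ) (b : Fin d → ℤ) (E : ℕ),
        (∀ (i : F) k, |restrictedSum d Δ i (z i) k - b k| ≤ (E : ℤ)) →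
          ∀ k, |b k| ≤ (C : ℤ) * E) := by
  choose C hC using fun F : Finset (Finset (box d Δ)) =>
    common_or_bounded (fun i : F => restrictedSum d Δ i)
  refine ⟨∑ F, C F, fun F => ?_⟩
  have hle : C F ≤ ∑ F, C F :=
    Finset.single_le_sum (f := C) (fun _ _ => Nat.zero_le _) (Finset.mem_univ F)
  have hle' : (C F : ℤ) ≤ ((∑ F, C F : ℕ) : ℤ) := by exact_mod_cast hle
  rcases hC F with ⟨z, w, h1, h2, h3, h4⟩ | h
  · exact Or.inl ⟨z, w, fun i v => (h1 i v).trans hle, h2, fun k => (h3 k).trans hle', h4⟩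
  · refine Or.inr fun z b E hE k => (h z b E hE k).trans ?_
    gcongr

lemma sum_eq_sum_count (d Δ : ℕ) (T : Multiset (Fin d → ℤ)) (hT : ∀ v ∈ T, ∀ k, |v k| ≤ (Δ : ℤ)) :
    T.sum = ∑ v : box d Δ, T.count (v : Fin d → ℤ) • (v : Fin d → ℤ) := by
  rw [Finset.sum_coe_sort (box d Δ) (fun v => T.count v • v)]
  apply Finset.sum_multiset_count_of_subset
  intro v hv
  rw [Multiset.mem_toFinset] at hv
  rw [Finset.mem_Icc, Pi.le_def, Pi.le_def]
  exact ⟨fun k => (abs_le.1 (hT v hv k)).1, fun k => (abs_le.1 (hT v hv k)).2⟩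

/-- Dropping vectors of multiplicity at most `t` changes the sum by at most `|W| Δ t`. -/
lemma restrictedSum_close (d Δ : ℕ) (T : Multiset (Fin d → ℤ))
    (hT : ∀ v ∈ T, ∀ k, |v k| ≤ (Δ : ℤ)) (t : ℕ) (k : Fin d) :
    |restrictedSum d Δ (Finset.univ.filter fun v : box d Δ => t < T.count (v : Fin d → ℤ))
        (fun v => T.count (v : Fin d → ℤ)) k - T.sum k| ≤
      ((Fintype.card (box d Δ) * Δ * t : ℕ) : ℤ) := by
  classical
  rw [sum_eq_sum_count d Δ T hT, ← Finset.sum_filter_add_sum_filter_not Finset.univ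
    (fun v : box d Δ => t < T.count (v : Fin d → ℤ))]
  simp only [restrictedSum, AddMonoidHom.coe_mk, ZeroHom.coe_mk, Pi.add_apply]
  rw [sub_add_cancel_left, abs_neg, Finset.sum_apply]
  refine (Finset.abs_sum_le_sum_abs _ _).trans ?_
  calc _ ≤ ∑ v ∈ Finset.univ.filter (fun v : box d Δ => ¬ t < T.count (v : Fin d → ℤ)),
        ((Δ * t : ℕ) : ℤ) := by
        refine Finset.sum_le_sum fun v hv => ?_
        rw [Finset.mem_filter] at hv
        have hv2 : ((T.count (v : Fin d → ℤ) : ℕ) : ℤ) ≤ t := by exact_mod_cast not_lt.1 hv.2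
        have hm := Finset.mem_Icc.1 v.2
        have hk : |(v : Fin d → ℤ) k| ≤ Δ := abs_le.2 ⟨hm.1 k, hm.2 k⟩
        rw [Pi.smul_apply, nsmul_eq_mul, abs_mul, Nat.abs_cast, mul_comm]
        push_cast
        gcongr
    _ ≤ ∑ v : box d Δ, ((Δ * t : ℕ) : ℤ) :=
        Finset.sum_le_sum_of_subset_of_nonneg (Finset.filter_subset _ _)
          (fun _ _ _ => by positivity)
    _ = _ := by simp [mul_assoc]

/-- A restricted sum with coefficients at most the multiplicities in `T` is the sum of a
sub-multiset of `T`. -/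
lemma exists_submultiset (d Δ : ℕ) (T : Multiset (Fin d → ℤ)) (L : Finset (box d Δ))
    (z : box d Δ → ℕ) (hz : ∀ v ∈ L, z v ≤ T.count (v : Fin d → ℤ)) :
    ∃ S ≤ T, S.sum = restrictedSum d Δ L z := by
  classical
  refine ⟨∑ v ∈ L, z v • {(v : Fin d → ℤ)}, ?_, ?_⟩
  · rw [Multiset.le_iff_count]
    intro a
    rw [Multiset.count_sum']
    simp only [Multiset.count_nsmul, Multiset.count_singleton]
    by_cases ha : ∃ u ∈ L, (u : Fin d → ℤ) = a
    · obtain ⟨u, hu, rfl⟩ := ha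
      rw [Finset.sum_eq_single_of_mem u hu]
      · simpa using hz u hu
      · intro v _ hvu
        simp [Subtype.coe_injective.eq_iff, hvu.symm]
    · push Not at ha
      rw [Finset.sum_eq_zero]
      · exact Nat.zero_le _
      · intro v hv
        simp [(ha v hv).symm]
  · simp only [restrictedSum, AddMonoidHom.coe_mk, ZeroHom.coe_mk]
    rw [← Multiset.coe_sumAddMonoidHom, map_sum]
    simp only [map_nsmul, Multiset.coe_sumAddMonoidHom, Multiset.sum_singleton]

/-- after Cslovjecsek, Eisenbrand, Pilipczuk, Venzin, Weismantel:
if `n` multisets of short integer vectors all have sums within `ε` of a common large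
vector `b`, then one can pick nonempty sub-multisets of each that all have the same
small sum `b'`. -/
theorem common_submultiset_sums :
    ∃ f : ℕ → ℕ → ℕ,
      ∀ (d Δ n : ℕ), 0 < d → 0 < Δ → 0 < n →
      ∀ T : Fin n → Multiset (Fin d → ℤ),
        (∀ i, ∀ v ∈ T i, ∀ k, |v k| ≤ (Δ : ℤ)) →
      ∀ (b : Fin d → ℤ) (ε : ℕ), 0 < ε →
        (∀ i k, |(T i).sum k - b k| < (ε : ℤ)) →
        (∃ k, (ε : ℤ) * (f d Δ : ℤ) < |b k|) →
        ∃ S : Fin n → Multiset (Fin d → ℤ),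
          (∀ i, S i ≠ 0 ∧ S i ≤ T i) ∧
          ∃ b' : Fin d → ℤ, (∀ k, |b' k| ≤ (f d Δ : ℤ)) ∧ ∀ i, (S i).sum = b' := by
  classical
  choose C hC using uniform_dichotomy
  -- A vector is frequent if its multiplicity exceeds `|b k| / K` with
  -- `K = 2 C |W| Δ + 1`; then `C` times the contribution of the infrequent vectors is at
  -- most `|b k| / 2`. The summand `C * K` of `f` gives `C ≤ |b k| / K`.
  refine ⟨fun d Δ => 2 * C d Δ + C d Δ * (2 * C d Δ * (Fintype.card (box d Δ) * Δ) + 1), ?_⟩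
  intro d Δ n _ _ _ T hT b ε hε hTb ⟨k₀, hk₀⟩
  specialize hC d Δ
  beta_reduce at hk₀ ⊢
  generalize C d Δ = c at hC hk₀ ⊢
  set N := Fintype.card (box d Δ) * Δ with hN
  set K := 2 * c * N + 1 with hK
  obtain ⟨B, hB⟩ : ∃ B : ℕ, (B : ℤ) = |b k₀| := ⟨(b k₀).natAbs, by simp⟩
  rw [← hB] at hk₀
  have hk₀' : ε * (2 * c + c * K) < B := by exact_mod_cast hk₀
  set t := B / K with ht
  have htK : K * t ≤ B := Nat.mul_div_le B K
  have hct : c ≤ t := by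
    rw [ht, Nat.le_div_iff_mul_le (by omega)]
    nlinarith
  let L : Fin n → Finset (box d Δ) := fun i =>
    Finset.univ.filter fun v : box d Δ => t < (T i).count (v : Fin d → ℤ)
  let F : Finset (Finset (box d Δ)) := Finset.univ.image L
  have hLF : ∀ i, L i ∈ F := fun i => Finset.mem_image_of_mem L (Finset.mem_univ i)
  rcases hC F with ⟨z, w, h1, h2, h3, h4⟩ | h
  · have hS : ∀ i, ∃ S ≤ T i, S.sum = w := by
      intro i
      rw [← h4 ⟨L i, hLF i⟩]
      refine exists_submultiset d Δ (T i) (L i) _ fun v hv => ?_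
      have hv' : t < (T i).count (v : Fin d → ℤ) := (Finset.mem_filter.1 hv).2
      exact ((h1 _ v).trans hct).trans hv'.le
    choose S hST hSw using hS
    refine ⟨S, fun i => ⟨?_, hST i⟩, w, fun k => (h3 k).trans ?_, hSw⟩
    · intro h0
      apply h2
      rw [← hSw i, h0, Multiset.sum_zero]
    · have : c ≤ 2 * c + c * K := by nlinarith
      exact_mod_cast this
  · exfalso
    have hrep : ∀ M : F, ∃ i, L i = M := fun M => by
      obtain ⟨i, -, hi⟩ := Finset.mem_image.1 M.2
      exact ⟨i, hi⟩
    choose r hr using hrep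
    have hb := h (fun M v => (T (r M)).count (v : Fin d → ℤ)) b (N * t + ε) (by
      intro M k
      have a1 := restrictedSum_close d Δ (T (r M)) (hT _) t k
      have a2 := hTb (r M) k
      rw [← hr M]
      refine (abs_sub_le _ ((T (r M)).sum k) _).trans ?_
      push_cast at a1 ⊢
      rw [hN]
      push_cast
      exact add_le_add a1 a2.le) k₀
    rw [← hB] at hb
    have hb' : B ≤ c * (N * t + ε) := by exact_mod_cast hb
    rw [hK] at htK
    have e1 : 2 * (c * (N * t)) ≤ B := by nlinarith
    have e2 : 2 * (c * ε) ≤ ε * (2 * c + c * K) := by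
      have : 0 ≤ ε * (c * K) := Nat.zero_le _
      nlinarith
    rw [mul_add] at hb'
    omega
end
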